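/- arXiv:1210.5869 — 2 statements merged into one kernel-verified Lean document; each statement's English description precedes it below -/
import Mathlib

section
/- Let ℓ ≥ 2 and n = 3ℓ+2. A composition c of n is maximal if and only if c = (3^ℓ, 2) (ℓ parts equal to 3 followed by a single part equal to 2). -/
/-- `i` (1-based, with `1 < i < n`) is a peak of the permutation `σ` of `{1,…,n}`
(represented as a permutation of `Fin n`, position `j` (1-based) being index `j-1`). -/
def IsPeak {n : ℕ} (σ : Equiv.Perm (Fin n)) (i : ℕ) : Prop :=
  ∃ (h₂ : 2 ≤ i) (h₃ : i < n),
    σ ⟨i - 2, by omega⟩ < σ ⟨i - 1, by omega⟩ ∧ σ ⟨i, h₃⟩ < σ ⟨i - 1, by omega⟩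

open Classical in
/-- The peak set of a permutation of `{1,…,n}` (as a set of 1-based positions). -/
noncomputable def peakSet {n : ℕ} (σ : Equiv.Perm (Fin n)) : Finset ℕ :=
  (Finset.range n).filter (fun i => IsPeak σ i)

/-- `P(S;n)`: the number of permutations of `{1,…,n}` with peak set `S`. -/
noncomputable def numPeakSet (n : ℕ) (S : Finset ℕ) : ℕ :=
  Nat.card {σ : Equiv.Perm (Fin n) // peakSet σ = S}

/-- `c` is a composition of `n`: a list of positive integers summing to `n`. -/
def IsComposition (n : ℕ) (c : List ℕ) : Prop :=
  (∀ x ∈ c, 0 < x) ∧ c.sum = n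

/-- The set `S(c)` of proper partial sums of the composition `c`. -/
def compPeaks (c : List ℕ) : Finset ℕ :=
  (Finset.range (c.length - 1)).image (fun i => (c.take (i + 1)).sum)

/-- `P(c)`: the number of permutations of `{1,…,|c|}` whose peak set is `S(c)`. -/
noncomputable def Pcomp (c : List ℕ) : ℕ :=
  numPeakSet c.sum (compPeaks c)

/-- A composition is maximal if `P(b) ≤ P(c)` for every composition `b` of the same size. -/
def IsMaximal (c : List ℕ) : Prop :=
  ∀ b : List ℕ, IsComposition c.sum b → Pcomp b ≤ Pcomp c


section PeakCounting

variable {α : Type*} [LinearOrder α]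

/-- `i` is a (1-based) peak of the list `l`. -/
def lpk (l : List α) (i : ℕ) : Prop :=
  ∃ j a b c, i = j + 2 ∧ l[j]? = some a ∧ l[j+1]? = some b ∧ l[j+2]? = some c ∧ a < b ∧ c < b

/-- the peak set of `l` is `S` -/
def LP (l : List α) (S : Finset ℕ) : Prop := ∀ i, i ∈ S ↔ lpk l i

lemma lpk_bounds {l : List α} {i : ℕ} (h : lpk l i) : 2 ≤ i ∧ i < l.length := by
  obtain ⟨j, a, b, c, rfl, h1, h2, h3, -⟩ := h
  have := (List.getElem?_eq_some_iff.1 h3).1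
  omega

lemma lpk_succ {l : List α} {i : ℕ} (h : lpk l i) (h' : lpk l (i+1)) : False := by
  obtain ⟨j, a, b, c, rfl, h1, h2, h3, h4, h5⟩ := h
  obtain ⟨j', a', b', c', hj, h1', h2', h3', h4', h5'⟩ := h'
  obtain rfl : j' = j + 1 := by omega
  rw [h2] at h1'
  rw [show j + 1 + 1 = j + 2 from rfl, h3] at h2'
  simp only [Option.some.injEq] at h1' h2'
  subst h1' h2'
  exact lt_asymm h5 h4'

lemma lpk_split (l1 l2 : List α) (m : α) (H1 : ∀ x ∈ l1, x < m) (H2 : ∀ x ∈ l2, x < m) (i : ℕ) :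
    lpk (l1 ++ m :: l2) i ↔ lpk l1 i ∨ (i = l1.length + 1 ∧ l1 ≠ [] ∧ l2 ≠ []) ∨
      ∃ i', i = l1.length + 1 + i' ∧ lpk l2 i' := by
  constructor
  · rintro ⟨j, a, b, c, rfl, h1, h2, h3, h4, h5⟩
    rcases lt_trichotomy (j + 1) l1.length with h | h | h
    · left
      rw [List.getElem?_append_left (by omega)] at h1 h2
      rcases Nat.lt_or_ge (j + 2) l1.length with h' | h'
      · rw [List.getElem?_append_left (by omega)] at h3
        exact ⟨j, a, b, c, rfl, h1, h2, h3, h4, h5⟩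
      · exfalso
        rw [List.getElem?_append_right (by omega)] at h3
        have : j + 2 - l1.length = 0 := by omega
        simp only [this, List.getElem?_cons_zero, Option.some.injEq] at h3
        subst h3
        exact lt_asymm h5 (H1 b (List.mem_of_getElem? h2))
    · right; left
      refine ⟨by omega, ?_, ?_⟩
      · rintro rfl; simp at h
      · rintro rfl
        have := (List.getElem?_eq_some_iff.1 h3).1
        simp at this; omega
    · right; right
      obtain ⟨k, rfl⟩ : ∃ k, j = l1.length + k := ⟨j - l1.length, by omega⟩
      have e1 : ∀ r, (l1 ++ m :: l2)[l1.length + r]? = (m :: l2)[r]? := by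
        intro r
        rw [List.getElem?_append_right (by omega)]
        congr 1; omega
      rw [e1] at h1
      rw [show l1.length + k + 1 = l1.length + (k + 1) by ring, e1] at h2
      rw [show l1.length + k + 2 = l1.length + (k + 2) by ring, e1] at h3
      rcases k with _ | k
      · exfalso
        simp only [List.getElem?_cons_zero, Option.some.injEq, List.getElem?_cons_succ] at h1 h2
        subst h1
        exact lt_asymm h4 (H2 b (List.mem_of_getElem? h2))
      · simp only [List.getElem?_cons_succ] at h1 h2 h3
        exact ⟨k + 2, by ring, k, a, b, c, rfl, h1, h2, h3, h4, h5⟩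
  · rintro (⟨j, a, b, c, rfl, h1, h2, h3, h4, h5⟩ | ⟨rfl, hl1, hl2⟩ |
      ⟨i', rfl, j, a, b, c, rfl, h1, h2, h3, h4, h5⟩)
    · have := (List.getElem?_eq_some_iff.1 h3).1
      refine ⟨j, a, b, c, rfl, ?_, ?_, ?_, h4, h5⟩ <;>
        rwa [List.getElem?_append_left (by omega)]
    · obtain ⟨c, l2, rfl⟩ := List.exists_cons_of_ne_nil hl2
      obtain ⟨l, a, rfl⟩ : ∃ l a, l1 = l ++ [a] :=
        ⟨_, _, (List.dropLast_append_getLast hl1).symm⟩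
      refine ⟨l.length, a, m, c, by simp, ?_, ?_, ?_, H1 a (by simp), H2 c (by simp)⟩ <;> simp
    · refine ⟨l1.length + 1 + j, a, b, c, by ring, ?_, ?_, ?_, h4, h5⟩
      · rw [List.getElem?_append_right (by omega),
          show l1.length + 1 + j - l1.length = j + 1 by omega]
        simpa using h1
      · rw [List.getElem?_append_right (by omega),
          show l1.length + 1 + j + 1 - l1.length = j + 1 + 1 by omega]
        simpa using h2
      · rw [List.getElem?_append_right (by omega),
          show l1.length + 1 + j + 2 - l1.length = j + 2 + 1 by omega]
        simpa using h3

lemma mem_cP {e : List ℕ} {x : ℕ} :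
    x ∈ compPeaks e ↔ ∃ γ δ, γ ≠ [] ∧ δ ≠ [] ∧ e = γ ++ δ ∧ x = γ.sum := by
  unfold compPeaks
  simp only [Finset.mem_image, Finset.mem_range]
  constructor
  · rintro ⟨i, hi, rfl⟩
    refine ⟨e.take (i+1), e.drop (i+1), ?_, ?_, (List.take_append_drop _ _).symm, rfl⟩
    · intro h
      have := congrArg List.length h
      simp at this; subst this; simp at hi
    · intro h
      have := congrArg List.length h
      simp at this; omega
  · rintro ⟨γ, δ, h1, h2, rfl, rfl⟩
    have := List.length_pos_iff.2 h1
    have := List.length_pos_iff.2 h2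
    refine ⟨γ.length - 1, by simp; omega, ?_⟩
    rw [show γ.length - 1 + 1 = γ.length by omega, List.take_left]

lemma cP_append {γ δ : List ℕ} (h1 : γ ≠ []) (h2 : δ ≠ []) (x : ℕ) :
    x ∈ compPeaks (γ ++ δ) ↔ x ∈ compPeaks γ ∨ x = γ.sum ∨
      ∃ y, x = γ.sum + y ∧ y ∈ compPeaks δ := by
  simp only [mem_cP]
  constructor
  · rintro ⟨u, v, hu, hv, h, rfl⟩
    rcases List.append_eq_append_iff.1 h with ⟨w, rfl, rfl⟩ | ⟨w, rfl, rfl⟩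
    · by_cases hw : w = []
      · subst hw; right; left; simp
      · right; right
        exact ⟨w.sum, by simp, w, v, hw, hv, rfl, rfl⟩
    · by_cases hw : w = []
      · subst hw; right; left; simp
      · left
        exact ⟨u, w, hu, hw, rfl, rfl⟩
  · rintro (⟨u, v, hu, hv, rfl, rfl⟩ | rfl | ⟨y, rfl, u, v, hu, hv, rfl, rfl⟩)
    · exact ⟨u, v ++ δ, hu, by simp [hv], by simp, rfl⟩
    · exact ⟨γ, δ, h1, h2, rfl, rfl⟩
    · exact ⟨γ ++ u, v, by simp [h1], hv, by simp, by simp⟩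

lemma list_sum_pos {u : List ℕ} (hu : u ≠ []) (h : ∀ x ∈ u, 0 < x) : 0 < u.sum := by
  obtain ⟨a, v, rfl⟩ := List.exists_cons_of_ne_nil hu
  have := h a (by simp)
  simp; omega

lemma cP_bounds {e : List ℕ} (he : ∀ x ∈ e, 0 < x) {x : ℕ} (hx : x ∈ compPeaks e) :
    0 < x ∧ x < e.sum := by
  obtain ⟨u, v, hu, hv, rfl, rfl⟩ := mem_cP.1 hx
  have := list_sum_pos hu (fun x hx => he x (by simp [hx]))
  have := list_sum_pos hv (fun x hx => he x (by simp [hx]))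
  simp; omega

lemma cP_cons_succ (a : ℕ) (γ : List ℕ) (x : ℕ) :
    x ∈ compPeaks ((a + 1) :: γ) ↔ ∃ y, x = y + 1 ∧ y ∈ compPeaks (a :: γ) := by
  simp only [mem_cP]
  constructor
  · rintro ⟨u, v, hu, hv, h, rfl⟩
    obtain ⟨c, u, rfl⟩ := List.exists_cons_of_ne_nil hu
    simp only [List.cons_append, List.cons.injEq] at h
    obtain ⟨rfl, rfl⟩ := h
    exact ⟨a + u.sum, by simp; ring, a :: u, v, by simp, hv, by simp, by simp⟩
  · rintro ⟨y, rfl, u, v, hu, hv, h, rfl⟩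
    obtain ⟨c, u, rfl⟩ := List.exists_cons_of_ne_nil hu
    simp only [List.cons_append, List.cons.injEq] at h
    obtain ⟨rfl, rfl⟩ := h
    exact ⟨(a+1) :: u, v, by simp, hv, by simp, by simp; ring⟩

lemma cP_concat (δ : List ℕ) (b b' : ℕ) : compPeaks (δ ++ [b]) = compPeaks (δ ++ [b']) := by
  by_cases hδ : δ = []
  · subst hδ; simp [compPeaks]
  · ext x
    have hs : ∀ (c y : ℕ), y ∉ compPeaks [c] := by simp [compPeaks]
    rw [cP_append hδ (by simp), cP_append hδ (by simp)]
    simp [hs]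

lemma LP_mid {l1 l2 : List α} {m : α} (H1 : ∀ x ∈ l1, x < m) (H2 : ∀ x ∈ l2, x < m)
    (hl1 : l1 ≠ []) (hl2 : l2 ≠ []) {γ δ : List ℕ} (hγ : γ ≠ []) (hδ : δ ≠ [])
    (pγ : ∀ x ∈ γ, 0 < x) (pδ : ∀ x ∈ δ, 0 < x) (hs : l1.length + 1 = γ.sum) :
    LP (l1 ++ m :: l2) (compPeaks (γ ++ δ)) ↔ LP l1 (compPeaks γ) ∧ LP l2 (compPeaks δ) := by
  unfold LP
  simp only [cP_append hγ hδ, lpk_split l1 l2 m H1 H2]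
  have b1 : ∀ i, lpk l1 i → i < l1.length := fun i h => (lpk_bounds h).2
  have b2 : ∀ i, lpk l2 i → 0 < i := fun i h => by have := (lpk_bounds h).1; omega
  have b3 : ∀ i, i ∈ compPeaks γ → i < γ.sum := fun i h => (cP_bounds pγ h).2
  have b4 : ∀ i, i ∈ compPeaks δ → 0 < i := fun i h => (cP_bounds pδ h).1
  constructor
  · intro h
    constructor
    · intro i
      have := h i
      constructor
      · intro hi
        rcases this.1 (Or.inl hi) with h' | h' | ⟨y, h', h''⟩
        · exact h'
        · have := b3 _ hi; omega
        · have := b3 _ hi; omega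
      · intro hi
        rcases this.2 (Or.inl hi) with h' | h' | ⟨y, h', h''⟩
        · exact h'
        · have := b1 _ hi; omega
        · have := b1 _ hi; omega
    · intro i
      have := h (l1.length + 1 + i)
      constructor
      · intro hi
        rcases this.1 (Or.inr (Or.inr ⟨i, by omega, hi⟩)) with h' | h' | ⟨y, h', h''⟩
        · have := b1 _ h'; omega
        · have := b4 _ hi; omega
        · obtain rfl : i = y := by omega
          exact h''
      · intro hi
        rcases this.2 (Or.inr (Or.inr ⟨i, by omega, hi⟩)) with h' | h' | ⟨y, h', h''⟩
        · have := b3 _ h'; omega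
        · have := b2 _ hi; omega
        · obtain rfl : i = y := by omega
          exact h''
  · rintro ⟨h, h'⟩ i
    simp only [h, h', hs, ne_eq, hl1, hl2, not_false_eq_true, and_true]

lemma LP_must {l1 l2 : List α} {m : α} (H1 : ∀ x ∈ l1, x < m) (H2 : ∀ x ∈ l2, x < m)
    (hl1 : l1 ≠ []) (hl2 : l2 ≠ []) {S : Finset ℕ} (h : LP (l1 ++ m :: l2) S) :
    l1.length + 1 ∈ S :=
  (h _).2 ((lpk_split l1 l2 m H1 H2 _).2 (Or.inr (Or.inl ⟨rfl, hl1, hl2⟩)))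

lemma LP_first {l2 : List α} {m : α} (H2 : ∀ x ∈ l2, x < m) (a : ℕ) (γ : List ℕ) :
    LP (m :: l2) (compPeaks ((a+1) :: γ)) ↔ LP l2 (compPeaks (a :: γ)) := by
  have := lpk_split [] l2 m (by simp) H2
  simp only [List.nil_append] at this
  unfold LP
  simp only [this, cP_cons_succ]
  have h0 : ∀ i, ¬ lpk ([] : List α) i := fun i h => by have := (lpk_bounds h).2; simp at this
  simp only [h0, false_or, List.length_nil, ne_eq, not_true_eq_false, false_and, and_false, zero_add]
  constructor
  · intro h i
    have := h (i+1)
    constructor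
    · intro hi
      obtain ⟨y, h1, h2⟩ := this.1 ⟨i, rfl, hi⟩
      obtain rfl : i = y := by omega
      exact h2
    · intro hi
      obtain ⟨y, h1, h2⟩ := this.2 ⟨i, by omega, hi⟩
      obtain rfl : i = y := by omega
      exact h2
  · intro h i
    simp only [h, add_comm]

lemma LP_last {l1 : List α} {m : α} (H1 : ∀ x ∈ l1, x < m) (S : Finset ℕ) :
    LP (l1 ++ [m]) S ↔ LP l1 S := by
  have := lpk_split l1 [] m H1 (by simp)
  have h0 : ∀ i, ¬ lpk ([] : List α) i := fun i h => by have := (lpk_bounds h).2; simp at this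
  unfold LP
  simp [this, h0]

end PeakCounting

section Counting

/-- arrangements of `T` -/
def arr {α : Type*} [DecidableEq α] (T : Finset α) : Finset (List α) := T.val.lists.toFinset

open Classical in
/-- number of arrangements of `T` with peak set `S` -/
noncomputable def cnt {α : Type*} [LinearOrder α] (T : Finset α) (S : Finset ℕ) : ℕ :=
  (((arr T)).filter (fun l => LP l S)).card

/-- number of arrangements of `Fin n` with peak set `S` -/
noncomputable def cN (n : ℕ) (S : Finset ℕ) : ℕ := cnt (Finset.univ : Finset (Fin n)) S

variable {α : Type*} [LinearOrder α]

lemma lists_iff {T : Finset α} {l : List α} : l ∈ (arr T) ↔ l.Nodup ∧ l.toFinset = T := by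
  unfold arr
  rw [Multiset.mem_toFinset, Multiset.mem_lists_iff]
  constructor
  · intro h
    have hn : l.Nodup := by
      have := T.nodup
      rw [h] at this
      simpa using this
    refine ⟨hn, ?_⟩
    apply Finset.val_injective
    rw [h, List.toFinset_val, hn.dedup]; rfl
  · rintro ⟨h1, rfl⟩
    rw [List.toFinset_val, h1.dedup]; rfl

lemma lpk_map {β : Type*} [LinearOrder β] (f : α ↪o β) (l : List α) (i : ℕ) :
    lpk (l.map f) i ↔ lpk l i := by
  unfold lpk
  constructor
  · rintro ⟨j, a, b, c, rfl, h1, h2, h3, h4, h5⟩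
    simp only [List.getElem?_map, Option.map_eq_some_iff] at h1 h2 h3
    obtain ⟨a, h1, rfl⟩ := h1
    obtain ⟨b, h2, rfl⟩ := h2
    obtain ⟨c, h3, rfl⟩ := h3
    exact ⟨j, a, b, c, rfl, h1, h2, h3, by simpa using h4, by simpa using h5⟩
  · rintro ⟨j, a, b, c, rfl, h1, h2, h3, h4, h5⟩
    exact ⟨j, f a, f b, f c, rfl, by simp [h1], by simp [h2], by simp [h3], by simpa using h4,
      by simpa using h5⟩

lemma toFinset_map' {β : Type*} [DecidableEq β] (f : α → β) (l : List α) :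
    (l.map f).toFinset = l.toFinset.image f := by
  ext x; simp

lemma cnt_eq (T : Finset α) (S : Finset ℕ) : cnt T S = cN T.card S := by
  classical
  unfold cN cnt
  symm
  refine Finset.card_bij (fun (l : List (Fin T.card)) _ => l.map (T.orderEmbOfFin rfl)) ?_ ?_ ?_
  · intro l hl
    simp only [Finset.mem_filter, lists_iff] at hl ⊢
    obtain ⟨⟨h1, h2⟩, h3⟩ := hl
    refine ⟨⟨h1.map (T.orderEmbOfFin rfl).injective, ?_⟩, ?_⟩
    · rw [toFinset_map', h2]
      exact Finset.image_orderEmbOfFin_univ T rfl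
    · intro i
      rw [lpk_map]; exact h3 i
  · intro l _ l' _ h
    exact List.map_injective_iff.2 (T.orderEmbOfFin rfl).injective h
  · intro l hl
    simp only [Finset.mem_filter, lists_iff] at hl
    obtain ⟨⟨h1, h2⟩, h3⟩ := hl
    have : ∀ x ∈ l, x ∈ Set.range (T.orderEmbOfFin rfl) := by
      intro x hx
      rw [Finset.range_orderEmbOfFin]
      rw [← h2]; simpa using hx
    obtain ⟨l', rfl⟩ : ∃ l' : List (Fin T.card), l'.map (T.orderEmbOfFin rfl) = l := by
      have h := (Set.range_list_map (T.orderEmbOfFin rfl)).symm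
      have h' : l ∈ Set.range (List.map (T.orderEmbOfFin rfl)) := by
        rw [← h]; exact this
      exact h'
    refine ⟨l', ?_, rfl⟩
    simp only [Finset.mem_filter, lists_iff]
    refine ⟨⟨h1.of_map _, ?_⟩, ?_⟩
    · rw [toFinset_map'] at h2
      apply Finset.image_injective (T.orderEmbOfFin rfl).injective
      rw [h2]
      exact (Finset.image_orderEmbOfFin_univ T rfl).symm
    · intro i
      rw [← lpk_map (T.orderEmbOfFin rfl)]; exact h3 i

open Classical in
/-- arrangements of `T'` with a large `m` inserted after an arrangement of `T1` -/
noncomputable def cS (T' T1 : Finset α) (m : α) (S : Finset ℕ) : ℕ :=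
  (((arr T1) ×ˢ (arr (T' \ T1))).filter (fun p => LP (p.1 ++ m :: p.2) S)).card

lemma cnt_split {T' : Finset α} {m : α} (hm : m ∉ T') (S : Finset ℕ) :
    cnt (insert m T') S = ∑ T1 ∈ T'.powerset, cS T' T1 m S := by
  classical
  unfold cnt cS
  rw [← Finset.card_sigma]
  symm
  refine Finset.card_bij (fun p _ => p.2.1 ++ m :: p.2.2) ?_ ?_ ?_
  · rintro ⟨T1, l1, l2⟩ h
    simp only [Finset.mem_sigma, Finset.mem_filter, Finset.mem_product, lists_iff,
      Finset.mem_powerset] at h ⊢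
    obtain ⟨h0, ⟨⟨h1, h2⟩, h3, h4⟩, h5⟩ := h
    have e1 : ∀ x, x ∈ l1 ↔ x ∈ T1 := by intro x; rw [← h2]; simp
    have e2 : ∀ x, x ∈ l2 ↔ x ∈ T' \ T1 := by intro x; rw [← h4]; simp
    refine ⟨⟨?_, ?_⟩, h5⟩
    · rw [List.nodup_append]
      refine ⟨h1, ?_, ?_⟩
      · rw [List.nodup_cons]
        refine ⟨?_, h3⟩
        rw [e2]; simp [hm]
      · intro a ha b hb
        rw [e1] at ha
        rintro rfl
        rcases List.mem_cons.1 hb with rfl | hb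
        · exact hm (h0 ha)
        · rw [e2] at hb; simp [ha] at hb
    · ext x
      simp only [List.mem_toFinset, List.mem_append, List.mem_cons, e1, e2, Finset.mem_sdiff,
        Finset.mem_insert]
      have := @h0 x
      tauto
  · rintro ⟨T1, l1, l2⟩ h ⟨T1', l1', l2'⟩ h' heq
    simp only [Finset.mem_sigma, Finset.mem_filter, Finset.mem_product, lists_iff,
      Finset.mem_powerset] at h h'
    obtain ⟨h0, ⟨⟨h1, h2⟩, h3, h4⟩, h5⟩ := h
    obtain ⟨h0', ⟨⟨h1', h2'⟩, h3', h4'⟩, h5'⟩ := h'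
    have n1 : m ∉ l1 := fun hx => hm (h0 (by rw [← h2]; simpa using hx))
    have n1' : m ∉ l1' := fun hx => hm (h0' (by rw [← h2']; simpa using hx))
    have n2 : m ∉ l2 := fun hx => hm (by
      have : m ∈ T' \ T1 := by rw [← h4]; simpa using hx
      exact (Finset.mem_sdiff.1 this).1)
    simp only at heq
    have key : l1 = l1' ∧ l2 = l2' := by
      have := (List.append_cons_inj_of_notMem n1 n2).1 heq
      tauto
    obtain ⟨rfl, rfl⟩ := key
    subst h2 h2'
    rfl
  · intro l hl
    simp only [Finset.mem_filter, lists_iff] at hl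
    obtain ⟨⟨h1, h2⟩, h3⟩ := hl
    have : m ∈ l := by rw [← List.mem_toFinset, h2]; simp
    obtain ⟨l1, l2, rfl⟩ := List.append_of_mem this
    rw [List.nodup_append, List.nodup_cons] at h1
    obtain ⟨ha, ⟨hb, hc⟩, hd⟩ := h1
    have hT : T' = l1.toFinset ∪ l2.toFinset := by
      ext x
      have := Finset.ext_iff.1 h2 x
      simp only [List.mem_toFinset, List.mem_append, List.mem_cons, Finset.mem_insert,
        Finset.mem_union] at this ⊢
      by_cases hx : x = m
      · subst hx
        have : x ∉ l1 := fun h => hd x h x (by simp) rfl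
        tauto
      · tauto
    refine ⟨⟨l1.toFinset, l1, l2⟩, ?_, rfl⟩
    simp only [Finset.mem_sigma, Finset.mem_filter, Finset.mem_product, lists_iff,
      Finset.mem_powerset]
    refine ⟨by rw [hT]; exact Finset.subset_union_left, ⟨⟨ha, trivial⟩, hc, ?_⟩, h3⟩
    ext x
    rw [hT]
    simp only [List.mem_toFinset, Finset.mem_sdiff, Finset.mem_union]
    have := fun (h : x ∈ l1) (h' : x ∈ l2) => hd x h x (by simp [h']) rfl
    tauto

lemma length_of_lists {T : Finset α} {l : List α} (h : l ∈ (arr T)) : l.length = T.card := by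
  obtain ⟨h1, rfl⟩ := lists_iff.1 h
  exact (List.toFinset_card_of_nodup h1).symm

lemma mem_of_lists {T : Finset α} {l : List α} (h : l ∈ (arr T)) (x : α) :
    x ∈ l ↔ x ∈ T := by
  obtain ⟨h1, rfl⟩ := lists_iff.1 h
  simp

lemma lists_empty_iff {l : List α} : l ∈ arr (∅ : Finset α) ↔ l = [] := by
  rw [lists_iff]
  constructor
  · rintro ⟨-, h⟩
    simpa using h
  · rintro rfl; simp

lemma cS_first {T' : Finset α} {m : α} (hm : ∀ x ∈ T', x < m) (a : ℕ) (γ : List ℕ) :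
    cS T' ∅ m (compPeaks ((a+1)::γ)) = cN T'.card (compPeaks (a :: γ)) := by
  classical
  rw [← cnt_eq]
  unfold cS cnt
  refine Finset.card_bij (fun p _ => p.2) ?_ ?_ ?_
  · rintro ⟨l1, l2⟩ h
    simp only [Finset.mem_filter, Finset.mem_product, lists_empty_iff, Finset.sdiff_empty] at h ⊢
    obtain ⟨⟨rfl, h2⟩, h3⟩ := h
    exact ⟨h2, (LP_first (fun x hx => hm x ((mem_of_lists h2 x).1 hx)) a γ).1 h3⟩
  · rintro ⟨l1, l2⟩ h ⟨l1', l2'⟩ h' heq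
    simp only [Finset.mem_filter, Finset.mem_product, lists_empty_iff] at h h'
    simp only at heq
    rw [h.1.1, h'.1.1, heq]
  · intro l hl
    simp only [Finset.mem_filter] at hl
    refine ⟨([], l), ?_, rfl⟩
    simp only [Finset.mem_filter, Finset.mem_product, lists_empty_iff, Finset.sdiff_empty]
    exact ⟨⟨trivial, hl.1⟩,
      (LP_first (fun x hx => hm x ((mem_of_lists hl.1 x).1 hx)) a γ).2 hl.2⟩

lemma cS_last {T' : Finset α} {m : α} (hm : ∀ x ∈ T', x < m) (S : Finset ℕ) :
    cS T' T' m S = cN T'.card S := by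
  classical
  rw [← cnt_eq]
  unfold cS cnt
  refine Finset.card_bij (fun p _ => p.1) ?_ ?_ ?_
  · rintro ⟨l1, l2⟩ h
    simp only [Finset.mem_filter, Finset.mem_product, lists_empty_iff, Finset.sdiff_self] at h ⊢
    obtain ⟨⟨h2, rfl⟩, h3⟩ := h
    exact ⟨h2, (LP_last (fun x hx => hm x ((mem_of_lists h2 x).1 hx)) S).1 h3⟩
  · rintro ⟨l1, l2⟩ h ⟨l1', l2'⟩ h' heq
    simp only [Finset.mem_filter, Finset.mem_product, lists_empty_iff, Finset.sdiff_self] at h h'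
    simp only at heq
    rw [h.1.2, h'.1.2, heq]
  · intro l hl
    simp only [Finset.mem_filter] at hl
    refine ⟨(l, []), ?_, rfl⟩
    simp only [Finset.mem_filter, Finset.mem_product, lists_empty_iff, Finset.sdiff_self]
    exact ⟨⟨hl.1, trivial⟩,
      (LP_last (fun x hx => hm x ((mem_of_lists hl.1 x).1 hx)) S).2 hl.2⟩

lemma cS_zero {T' T1 : Finset α} {m : α} (hm : ∀ x ∈ T', x < m) (hT : T1 ⊆ T')
    (h0 : T1 ≠ ∅) (h1 : T1 ≠ T') {S : Finset ℕ} (hS : T1.card + 1 ∉ S) :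
    cS T' T1 m S = 0 := by
  classical
  unfold cS
  rw [Finset.card_eq_zero, Finset.filter_eq_empty_iff]
  rintro ⟨l1, l2⟩ h h'
  simp only [Finset.mem_product] at h h'
  apply hS
  rw [← length_of_lists h.1]
  refine LP_must ?_ ?_ ?_ ?_ h'
  · intro x hx
    exact hm x (hT ((mem_of_lists h.1 x).1 hx))
  · intro x hx
    exact hm x (Finset.sdiff_subset ((mem_of_lists h.2 x).1 hx))
  · rintro rfl
    have := length_of_lists h.1
    exact h0 (Finset.card_eq_zero.1 this.symm)
  · rintro rfl
    have := length_of_lists h.2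
    have := Finset.card_eq_zero.1 this.symm
    rw [Finset.sdiff_eq_empty_iff_subset] at this
    exact h1 (subset_antisymm hT this)

lemma cS_mid {T' T1 : Finset α} {m : α} (hm : ∀ x ∈ T', x < m) (hT : T1 ⊆ T')
    (h0 : T1 ≠ ∅) (h1 : T1 ≠ T') {γ δ : List ℕ} (hγ : γ ≠ []) (hδ : δ ≠ [])
    (pγ : ∀ x ∈ γ, 0 < x) (pδ : ∀ x ∈ δ, 0 < x) (hs : T1.card + 1 = γ.sum)  :
    cS T' T1 m (compPeaks (γ ++ δ)) =
      cN T1.card (compPeaks γ) * cN (T'.card - T1.card) (compPeaks δ) := by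
  classical
  rw [← cnt_eq, ← Finset.card_sdiff_of_subset hT, ← cnt_eq]
  unfold cS cnt
  rw [← Finset.card_product, ← Finset.filter_product]
  congr 1
  apply Finset.filter_congr
  rintro ⟨l1, l2⟩ h
  simp only [Finset.mem_product] at h ⊢
  apply LP_mid _ _ _ _ hγ hδ pγ pδ
  · rw [length_of_lists h.1]; exact hs
  · intro x hx
    exact hm x (hT ((mem_of_lists h.1 x).1 hx))
  · intro x hx
    exact hm x (Finset.sdiff_subset ((mem_of_lists h.2 x).1 hx))
  · rintro rfl
    have := length_of_lists h.1
    exact h0 (Finset.card_eq_zero.1 this.symm)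
  · rintro rfl
    have := length_of_lists h.2
    have := Finset.card_eq_zero.1 this.symm
    rw [Finset.sdiff_eq_empty_iff_subset] at this
    exact h1 (subset_antisymm hT this)

end Counting

section Recursion

lemma take_sum_lt {e : List ℕ} (he : ∀ x ∈ e, 0 < x) {i j : ℕ} (hij : i < j) (hj : j ≤ e.length) :
    (e.take i).sum < (e.take j).sum := by
  obtain ⟨k, rfl⟩ : ∃ k, j = i + k := ⟨j - i, by omega⟩
  rw [List.take_add, List.sum_append]
  have : 0 < ((e.drop i).take k).sum := by
    apply list_sum_pos
    · intro h
      have := congrArg List.length h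
      simp at this; omega
    · intro x hx
      exact he x (List.mem_of_mem_drop (List.mem_of_mem_take hx))
  omega

lemma cN_rec {n' : ℕ} (hn : 1 ≤ n') {e : List ℕ} {a b : ℕ} {γ δ : List ℕ} (h1 : e = (a+1) :: γ)
    (h2 : e = δ ++ [b+1]) (ha : 1 ≤ a) (hb : 1 ≤ b) (pos : ∀ x ∈ e, 0 < x) (hs : e.sum = n' + 2) :
    cN (n'+1) (compPeaks e) = cN n' (compPeaks (a :: γ)) + cN n' (compPeaks (δ ++ [b])) +
      ∑ i ∈ Finset.range (e.length - 1), n'.choose ((e.take (i+1)).sum - 1) *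
        (cN ((e.take (i+1)).sum - 1) (compPeaks (e.take (i+1))) *
          cN ((e.drop (i+1)).sum - 1) (compPeaks (e.drop (i+1)))) := by
  classical
  set m : Fin (n'+1) := Fin.last n'
  set T' : Finset (Fin (n'+1)) := Finset.univ.erase m with hT'
  have hcard : T'.card = n' := by simp [hT']
  have hm : ∀ x ∈ T', x < m := by
    intro x hx
    exact Fin.lt_last_iff_ne_last.2 (Finset.ne_of_mem_erase hx)
  have hm' : m ∉ T' := by simp [hT']
  have hu : (Finset.univ : Finset (Fin (n'+1))) = insert m T' := by
    rw [hT', Finset.insert_erase (Finset.mem_univ _)]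
  have hsum : ∀ i, (e.take i).sum + (e.drop i).sum = n' + 2 := by
    intro i; rw [← List.sum_append, List.take_append_drop, hs]
  have ht : ∀ i, 2 ≤ (e.take (i+1)).sum := by
    intro i; rw [h1]; simp; omega
  have hd : ∀ i < e.length - 1, 2 ≤ (e.drop (i+1)).sum := by
    intro i hi
    rw [h2] at hi ⊢
    simp at hi
    rw [List.drop_append_of_le_length (by omega)]; simp; omega
  set Z : ℕ → ℕ := fun i => (cN ((e.take (i+1)).sum - 1) (compPeaks (e.take (i+1))) *
          cN ((e.drop (i+1)).sum - 1) (compPeaks (e.drop (i+1)))) with hZ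
  have key : ∀ T1 ∈ T'.powerset, cS T' T1 m (compPeaks e) =
      (if T1 = ∅ then cN n' (compPeaks (a :: γ)) else 0) +
      (if T1 = T' then cN n' (compPeaks (δ ++ [b])) else 0) +
      ∑ i ∈ Finset.range (e.length - 1), if T1.card = (e.take (i+1)).sum - 1 then Z i else 0 := by
    intro T1 hT1
    rw [Finset.mem_powerset] at hT1
    have hne : T' ≠ ∅ := by
      intro h; rw [h] at hcard; simp at hcard; omega
    by_cases c0 : T1 = ∅
    · subst c0
      rw [if_pos rfl, if_neg (Ne.symm hne), Finset.sum_eq_zero, h1, cS_first hm, hcard]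
      · simp
      intro i hi
      rw [if_neg]
      have := ht i
      simp; omega
    by_cases c1 : T1 = T'
    · subst c1
      rw [if_pos rfl, if_neg c0, Finset.sum_eq_zero, h2, cS_last hm, hcard, cP_concat δ (b+1) b]
      · simp
      intro i hi
      rw [if_neg]
      have := hd i (Finset.mem_range.1 hi)
      have := hsum (i+1)
      have := ht i
      omega
    rw [if_neg c0, if_neg c1, zero_add, zero_add]
    by_cases hex : ∃ i < e.length - 1, T1.card = (e.take (i+1)).sum - 1
    · obtain ⟨i, hi, hc⟩ := hex
      have := ht i
      rw [Finset.sum_eq_single i, if_pos hc]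
      · conv_lhs => rw [← List.take_append_drop (i+1) e]
        rw [cS_mid hm hT1 c0 c1]
        · rw [hZ, hcard, hc]
          simp only
          congr 2
          have := hsum (i+1)
          have := hd i hi
          omega
        · intro h; rw [h] at this; simp at this
        · intro h
          have := hd i hi
          rw [h] at this; simp at this
        · intro x hx; exact pos x (List.mem_of_mem_take hx)
        · intro x hx; exact pos x (List.mem_of_mem_drop hx)
        · omega
      · intro j hj hji
        rw [if_neg]
        intro hc'
        have := ht j
        rw [Finset.mem_range] at hj
        rcases lt_or_gt_of_ne hji with h | h
        · have := take_sum_lt pos (show j + 1 < i + 1 by omega) (by omega)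
          omega
        · have := take_sum_lt pos (show i + 1 < j + 1 by omega) (by omega)
          omega
      · intro h; simp at h; omega
    · rw [Finset.sum_eq_zero]
      · apply cS_zero hm hT1 c0 c1
        intro hmem
        apply hex
        unfold compPeaks at hmem
        simp only [Finset.mem_image, Finset.mem_range] at hmem
        obtain ⟨i, hi, h⟩ := hmem
        exact ⟨i, hi, by omega⟩
      · intro i hi
        rw [if_neg]
        intro h
        exact hex ⟨i, Finset.mem_range.1 hi, h⟩
  unfold cN
  rw [hu, cnt_split hm', Finset.sum_congr rfl key, Finset.sum_add_distrib, Finset.sum_add_distrib,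
    Finset.sum_comm]
  congr 1
  · simp [cN]
  · apply Finset.sum_congr rfl
    intro i hi
    rw [← Finset.sum_filter, Finset.sum_const, ← Finset.powersetCard_eq_filter,
      Finset.card_powersetCard, hcard, smul_eq_mul]
    rfl

/-- the probability of the peak pattern `e` -/
noncomputable def gP (e : List ℕ) : ℝ := cN (e.sum - 1) (compPeaks e) / ((e.sum - 1).factorial : ℝ)

lemma gP_nonneg (e : List ℕ) : 0 ≤ gP e := by unfold gP; positivity

lemma gP_rec {e : List ℕ} {a b : ℕ} {γ δ : List ℕ} (h1 : e = (a+1) :: γ)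
    (h2 : e = δ ++ [b+1]) (ha : 1 ≤ a) (hb : 1 ≤ b) (pos : ∀ x ∈ e, 0 < x) (hs : 3 ≤ e.sum) :
    ((e.sum : ℝ) - 1) * gP e = gP (a :: γ) + gP (δ ++ [b]) +
      ∑ i ∈ Finset.range (e.length - 1), gP (e.take (i+1)) * gP (e.drop (i+1)) := by
  obtain ⟨n', hn'⟩ : ∃ n', e.sum = n' + 2 := ⟨e.sum - 2, by omega⟩
  have hn : 1 ≤ n' := by omega
  have key := cN_rec hn h1 h2 ha hb pos hn'
  have s1 : (a :: γ).sum - 1 = n' := by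
    have := hn'; rw [h1] at this; simp at this ⊢; omega
  have s2 : (δ ++ [b]).sum - 1 = n' := by
    have := hn'; rw [h2] at this; simp at this ⊢; omega
  have ht : ∀ i, 2 ≤ (e.take (i+1)).sum := by
    intro i; rw [h1]; simp; omega
  have hd : ∀ i < e.length - 1, 2 ≤ (e.drop (i+1)).sum := by
    intro i hi
    rw [h2] at hi ⊢
    simp at hi
    rw [List.drop_append_of_le_length (by omega)]; simp; omega
  have hsum : ∀ i, (e.take i).sum + (e.drop i).sum = n' + 2 := by
    intro i; rw [← List.sum_append, List.take_append_drop, hn']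
  have hf : (n'.factorial : ℝ) ≠ 0 := by positivity
  have hn1 : ((n' : ℝ) + 1) ≠ 0 := by positivity
  have e1 : ((e.sum : ℝ) - 1) * gP e = cN (n'+1) (compPeaks e) / (n'.factorial : ℝ) := by
    unfold gP
    rw [hn', show n' + 2 - 1 = n' + 1 by omega, Nat.factorial_succ]
    push_cast
    field_simp
    ring
  rw [e1, key]
  push_cast
  rw [add_div, add_div, Finset.sum_div]
  congr 1
  · unfold gP; rw [s1, s2]
  · apply Finset.sum_congr rfl
    intro i hi
    have := hd i (Finset.mem_range.1 hi)
    have := ht i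
    have := hsum (i+1)
    unfold gP
    obtain ⟨p, hp⟩ : ∃ p, (e.take (i+1)).sum - 1 = p := ⟨_, rfl⟩
    obtain ⟨q, hq⟩ : ∃ q, (e.drop (i+1)).sum - 1 = q := ⟨_, rfl⟩
    rw [hp, hq]
    have hpq : n' = p + q := by omega
    have := Nat.add_choose_mul_factorial_mul_factorial p q
    rw [← hpq, ← Nat.choose_symm_of_eq_add hpq] at this
    have : (n'.choose p : ℝ) * p.factorial * q.factorial = n'.factorial := by exact_mod_cast this
    rw [← this]
    have hp0 : (p.factorial : ℝ) ≠ 0 := by positivity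
    have hq0 : (q.factorial : ℝ) ≠ 0 := by positivity
    have hc0 : (n'.choose p : ℝ) ≠ 0 := by
      have := Nat.choose_pos (show p ≤ n' by omega)
      positivity
    field_simp

lemma cN_zero {n : ℕ} {S : Finset ℕ} (h : ∀ l : List (Fin n), l.length = n → ¬ LP l S) :
    cN n S = 0 := by
  classical
  unfold cN cnt
  rw [Finset.card_eq_zero, Finset.filter_eq_empty_iff]
  intro l hl
  apply h
  rw [length_of_lists hl]; simp

lemma gP_one {α β : List ℕ} (h : α ++ β ≠ []) : gP (α ++ 1 :: β) = 0 := by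
  unfold gP
  rw [cN_zero, Nat.cast_zero, zero_div]
  intro l hl hLP
  by_cases hα : α = []
  · subst hα
    have : 1 ∈ compPeaks ([] ++ 1 :: β) := by
      rw [mem_cP]
      exact ⟨[1], β, by simp, by simpa using h, by simp, by simp⟩
    have := lpk_bounds ((hLP _).1 this)
    omega
  have m1 : α.sum ∈ compPeaks (α ++ 1 :: β) := by
    rw [mem_cP]
    exact ⟨α, 1 :: β, hα, by simp, by simp, by simp⟩
  have p1 := (hLP _).1 m1
  by_cases hβ : β = []
  · subst hβ
    have := lpk_bounds p1
    rw [hl] at this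
    simp at this
  have m2 : α.sum + 1 ∈ compPeaks (α ++ 1 :: β) := by
    rw [mem_cP]
    exact ⟨α ++ [1], β, by simp, hβ, by simp, by simp⟩
  exact lpk_succ p1 ((hLP _).1 m2)

lemma gP_two : gP [2] = 1 := by
  classical
  have h : (arr (Finset.univ : Finset (Fin 1))).filter (fun l => LP l (compPeaks [2])) = {[0]} := by
    ext l
    simp only [Finset.mem_filter, Finset.mem_singleton]
    constructor
    · rintro ⟨h, -⟩
      have hl := length_of_lists h
      simp only [Finset.card_univ, Fintype.card_fin] at hl
      obtain ⟨x, rfl⟩ := List.length_eq_one_iff.1 hl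
      simp [Subsingleton.elim x 0]
    · rintro rfl
      refine ⟨lists_iff.2 (by simp), ?_⟩
      intro i
      constructor
      · intro h; simp [compPeaks] at h
      · intro h
        have := lpk_bounds h
        simp at this; omega
  have h' : cN 1 (compPeaks [2]) = 1 := by
    have h2 := congrArg Finset.card h
    rw [Finset.card_singleton] at h2
    unfold cN cnt
    convert h2
  have hs : ([2] : List ℕ).sum - 1 = 1 := rfl
  unfold gP
  rw [hs, h']
  simp

end Recursion

section Domination

lemma sum_cuts (α β : List ℕ) (e : ℕ) :
    ∑ i ∈ Finset.range ((α ++ e :: β).length - 1),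
      gP ((α ++ e :: β).take (i+1)) * gP ((α ++ e :: β).drop (i+1)) =
    ∑ i ∈ Finset.range α.length, gP (α.take (i+1)) * gP (α.drop (i+1) ++ e :: β) +
    ∑ j ∈ Finset.range β.length, gP (α ++ e :: β.take j) * gP (β.drop j) := by
  rw [show (α ++ e :: β).length - 1 = α.length + β.length by simp, Finset.sum_range_add]
  congr 1
  · apply Finset.sum_congr rfl
    intro i hi
    rw [Finset.mem_range] at hi
    rw [List.take_append_of_le_length (by omega), List.drop_append_of_le_length (by omega)]
  · apply Finset.sum_congr rfl
    intro j hj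
    rw [add_assoc, List.take_length_add_append, List.drop_length_add_append]
    simp

lemma gP_single (e : ℕ) (he : 2 ≤ e) : (e : ℝ) * gP [e+1] = 2 * gP [e] := by
  have := gP_rec (e := [e+1]) (a := e) (b := e) (γ := []) (δ := []) rfl rfl (by omega) (by omega)
    (by simp) (by simp; omega)
  simp at this
  linarith

lemma sum_take_lt {β : List ℕ} (hβ : ∀ x ∈ β, 2 ≤ x) {j : ℕ} (hj : j < β.length) :
    (β.take j).sum < β.sum := by
  have := take_sum_lt (e := β) (fun x hx => by have := hβ x hx; omega) hj le_rfl
  simpa using this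

lemma sum_drop_lt {β : List ℕ} (hβ : ∀ x ∈ β, 2 ≤ x) {j : ℕ} (hj : j < β.length) :
    (β.drop (j+1)).sum < β.sum := by
  have h1 := take_sum_lt (e := β) (fun x hx => by have := hβ x hx; omega)
    (show 0 < j + 1 by omega) (by omega)
  have h2 : (β.take (j+1)).sum + (β.drop (j+1)).sum = β.sum := by
    rw [← List.sum_append, List.take_append_drop]
  simp at h1
  omega

lemma gP_dom : ∀ N : ℕ, ∀ (α β : List ℕ) (e : ℕ), 3 ≤ e → (∀ x ∈ α, 2 ≤ x) → (∀ x ∈ β, 2 ≤ x) →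
    α.sum + e + β.sum = N →
    gP (α ++ e :: β) ≤ gP [e] * (gP (α ++ [2]) * gP (2 :: β)) := by
  intro N
  induction N using Nat.strong_induction_on with
  | _ N ih =>
  intro α β e he hα hβ hN
  have IHα : ∀ i ∈ Finset.range α.length, gP (α.take (i+1)) * gP (α.drop (i+1) ++ e :: β) ≤
      gP [e] * gP (2 :: β) * (gP (α.take (i+1)) * gP (α.drop (i+1) ++ [2])) := by
    intro i hi
    rw [Finset.mem_range] at hi
    have h1 := sum_drop_lt hα hi
    have := ih _ (by omega) (α.drop (i+1)) β e he
      (fun x hx => hα x (List.mem_of_mem_drop hx)) hβ rfl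
    have := mul_le_mul_of_nonneg_left this (gP_nonneg (α.take (i+1)))
    linarith
  have IHβ : ∀ j ∈ Finset.range β.length, gP (α ++ e :: β.take j) * gP (β.drop j) ≤
      gP [e] * gP (α ++ [2]) * (gP (2 :: β.take j) * gP (β.drop j)) := by
    intro i hi
    rw [Finset.mem_range] at hi
    have h1 := sum_take_lt hβ hi
    have := ih _ (by omega) α (β.take i) e he hα
      (fun x hx => hβ x (List.mem_of_mem_take hx)) rfl
    have := mul_le_mul_of_nonneg_right this (gP_nonneg (β.drop i))
    linarith
  have SA := Finset.sum_le_sum IHα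
  have SB := Finset.sum_le_sum IHβ
  rw [← Finset.mul_sum] at SA SB
  have cut := sum_cuts α β e
  have cutA := sum_cuts α [] 2
  have cutB := sum_cuts [] β 2
  simp only [List.length_nil, Finset.range_zero, Finset.sum_empty, add_zero, zero_add] at cutA cutB
  set SL := ∑ i ∈ Finset.range α.length, gP (α.take (i+1)) * gP (α.drop (i+1) ++ e :: β)
  set SR := ∑ j ∈ Finset.range β.length, gP (α ++ e :: β.take j) * gP (β.drop j)
  set XL := ∑ i ∈ Finset.range α.length, gP (α.take (i+1)) * gP (α.drop (i+1) ++ [2])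
  have eYR : ∑ j ∈ Finset.range β.length, gP ([] ++ 2 :: β.take j) * gP (β.drop j) =
    ∑ j ∈ Finset.range β.length, gP (2 :: β.take j) * gP (β.drop j) := rfl
  rw [eYR] at cutB
  set YR := ∑ j ∈ Finset.range β.length, gP (2 :: β.take j) * gP (β.drop j)
  have G0 := gP_nonneg [e]
  have posγ : ∀ x ∈ α ++ e :: β, 0 < x := by
    intro x hx
    simp only [List.mem_append, List.mem_cons] at hx
    rcases hx with hx | rfl | hx
    · have := hα x hx; omega
    · omega
    · have := hβ x hx; omega
  have X0 := gP_nonneg (α ++ [2])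
  have Y0 := gP_nonneg (2 :: β)
  obtain ⟨e', rfl⟩ : ∃ e', e = e' + 1 := ⟨e - 1, by omega⟩
  have hG := gP_single e' (by omega)
  have he' : (2 : ℝ) ≤ e' := by exact_mod_cast (by omega : 2 ≤ e')
  -- recursion for the two auxiliary patterns and the end bounds
  have recA : α ≠ [] → ∃ a α', 1 ≤ a ∧ α = (a+1) :: α' ∧
      ((α.sum : ℝ) + 1) * gP (α ++ [2]) = gP (a :: α' ++ [2]) + XL ∧
      gP (a :: α' ++ (e'+1) :: β) ≤ gP [e'+1] * (gP (a :: α' ++ [2]) * gP (2 :: β)) := by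
    intro hne
    obtain ⟨a, α', rfl⟩ := List.exists_cons_of_ne_nil hne
    have ha := hα a (by simp)
    obtain ⟨a, rfl⟩ : ∃ a', a = a' + 1 := ⟨a - 1, by omega⟩
    refine ⟨a, α', by omega, rfl, ?_, ?_⟩
    · have := gP_rec (e := (a+1) :: α' ++ [2]) (a := a) (b := 1) (γ := α' ++ [2])
        (δ := (a+1) :: α') rfl rfl (by omega) (by omega) ?_ (by simp; omega)
      · rw [cutA, gP_one (by simp)] at this
        have hc : ((((a+1) :: α' ++ [2]).sum : ℕ) : ℝ) - 1 = (((a+1) :: α').sum : ℕ) + 1 := by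
          rw [List.sum_append]; push_cast; norm_num; ring
        rw [hc] at this
        rw [this, List.cons_append]
        ring
      · intro x hx
        simp only [List.mem_append, List.mem_singleton] at hx
        rcases hx with hx | rfl
        · have := hα x hx; omega
        · omega
    · by_cases ha1 : a = 1
      · subst ha1
        have : gP (1 :: α' ++ (e'+1) :: β) = 0 := gP_one (α := []) (by simp)
        rw [this]
        have := gP_nonneg (1 :: α' ++ [2])
        positivity
      · apply ih _ _ (a :: α') β (e'+1) he _ hβ rfl
        · simp at hN ⊢; omega
        · intro x hx
          rcases List.mem_cons.1 hx with rfl | hx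
          · omega
          · exact hα x (by simp [hx])
  have recB : β ≠ [] → ∃ b β', 1 ≤ b ∧ β = β' ++ [b+1] ∧
      ((β.sum : ℝ) + 1) * gP (2 :: β) = gP (2 :: (β' ++ [b])) + YR ∧
      gP (α ++ (e'+1) :: (β' ++ [b])) ≤
        gP [e'+1] * (gP (α ++ [2]) * gP (2 :: (β' ++ [b]))) := by
    intro hne
    obtain ⟨β', b, rfl⟩ : ∃ l a, β = l ++ [a] :=
      ⟨_, _, (List.dropLast_append_getLast hne).symm⟩
    have hb := hβ b (by simp)
    obtain ⟨b, rfl⟩ : ∃ a', b = a' + 1 := ⟨b - 1, by omega⟩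
    refine ⟨b, β', by omega, rfl, ?_, ?_⟩
    · have := gP_rec (e := 2 :: (β' ++ [b+1])) (a := 1) (b := b) (γ := β' ++ [b+1])
        (δ := 2 :: β') rfl rfl (by omega) (by omega) ?_ (by simp; omega)
      · rw [show 2 :: (β' ++ [b+1]) = [] ++ 2 :: (β' ++ [b+1]) from rfl, cutB,
          show 1 :: (β' ++ [b+1]) = [] ++ 1 :: (β' ++ [b+1]) from rfl, gP_one (by simp)] at this
        have hc : ((([] ++ 2 :: (β' ++ [b+1])).sum : ℕ) : ℝ) - 1 = ((β' ++ [b+1]).sum : ℕ) + 1 := by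
          rw [List.nil_append, List.sum_cons]; push_cast; ring
        rw [hc] at this
        simp only [List.nil_append, List.cons_append] at this ⊢
        rw [this]
        ring
      · intro x hx
        simp only [List.mem_cons] at hx
        rcases hx with rfl | hx
        · omega
        · have := hβ x hx; omega
    · by_cases hb1 : b = 1
      · subst hb1
        have : gP (α ++ (e'+1) :: (β' ++ [1])) = 0 := by
          have := gP_one (α := α ++ (e'+1) :: β') (β := []) (by simp)
          simpa using this
        rw [this]
        have := gP_nonneg (2 :: (β' ++ [1]))
        positivity
      · apply ih _ _ α (β' ++ [b]) (e'+1) he hα _ rfl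
        · simp at hN ⊢; omega
        · intro x hx
          rcases List.mem_append.1 hx with hx | hx
          · exact hβ x (by simp [hx])
          · simp at hx; omega
  have S0 : (0:ℝ) ≤ α.sum := by positivity
  have S0' : (0:ℝ) ≤ β.sum := by positivity
  have hcast : (((α ++ (e'+1) :: β).sum : ℕ) : ℝ) - 1 = α.sum + β.sum + e' := by
    simp; ring
  have hγ3 : 3 ≤ (α ++ (e'+1) :: β).sum := by simp; omega
  have GX : 0 ≤ gP [e'+1] * (gP (α ++ [2]) * gP (2 :: β)) := by positivity
  have hpos : (0:ℝ) < α.sum + β.sum + e' := by linarith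
  by_cases hαn : α = []
  · subst hαn
    by_cases hβn : β = []
    · subst hβn
      simp [gP_two]
    · obtain ⟨b, β', hb, hβe, r1, r2⟩ := recB hβn
      have hrec := gP_rec (e := [] ++ (e'+1) :: β) (a := e') (b := b) (γ := β)
        (δ := (e'+1) :: β') rfl (by rw [hβe]; simp) (by omega) hb posγ hγ3
      rw [cut, hcast] at hrec
      have hfirst : gP (e' :: β) ≤ gP [e'] * gP (2 :: β) := by
        by_cases h2 : e' = 2
        · subst h2; rw [gP_two, one_mul]
        · have := ih (e' + β.sum) (by simp at hN; omega) [] β e' (by omega) (by simp) hβ (by simp)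
          simpa [gP_two] using this
      refine le_of_mul_le_mul_left ?_ hpos
      rw [hrec]
      simp only [List.nil_append, gP_two, one_mul, List.length_nil, List.cons_append,
        mul_one] at *
      have hSL : SL = 0 := rfl
      have : gP [e'] * gP (2 :: β) = gP [e'+1] * gP (2 :: β) * (e' / 2) := by
        have : gP [e'] = e' / 2 * gP [e'+1] := by linarith
        rw [this]; ring
      have h3 : gP [e'+1] * gP (2 :: β) * (β.sum + 1) = gP [e'+1] * (gP (2 :: (β' ++ [b])) + YR) := by
        rw [← r1]; ring
      have h4 : gP [e'+1] * gP (2 :: β) * 1 ≤ gP [e'+1] * gP (2 :: β) * (e' / 2) :=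
        mul_le_mul_of_nonneg_left (by linarith) GX
      simp only [List.sum_nil, Nat.cast_zero, zero_add]
      nlinarith
  · by_cases hβn : β = []
    · subst hβn
      obtain ⟨a, α', ha, hαe, r1, r2⟩ := recA hαn
      have hrec := gP_rec (e := α ++ (e'+1) :: []) (a := a) (b := e') (γ := α' ++ [e'+1])
        (δ := α) (by rw [hαe]; simp) rfl ha (by omega) posγ hγ3
      rw [cut, hcast] at hrec
      have hfirst : gP (α ++ [e']) ≤ gP [e'] * gP (α ++ [2]) := by
        by_cases h2 : e' = 2
        · subst h2; rw [gP_two, one_mul]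
        · have := ih (α.sum + e') (by simp at hN; omega) α [] e' (by omega) hα (by simp) (by simp)
          simpa [gP_two] using this
      refine le_of_mul_le_mul_left ?_ hpos
      rw [hrec]
      simp only [gP_two, List.cons_append, mul_one] at *
      have hSR : SR = 0 := rfl
      have : gP [e'] * gP (α ++ [2]) = gP [e'+1] * gP (α ++ [2]) * (e' / 2) := by
        have : gP [e'] = e' / 2 * gP [e'+1] := by linarith
        rw [this]; ring
      have h3 : gP [e'+1] * gP (α ++ [2]) * (α.sum + 1) =
          gP [e'+1] * (gP (a :: (α' ++ [2])) + XL) := by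
        rw [← r1]; ring
      have h4 : gP [e'+1] * gP (α ++ [2]) * 1 ≤ gP [e'+1] * gP (α ++ [2]) * (e' / 2) :=
        mul_le_mul_of_nonneg_left (by linarith) GX
      simp only [List.sum_nil, Nat.cast_zero, add_zero]
      nlinarith
    · obtain ⟨a, α', ha, hαe, r1, r2⟩ := recA hαn
      obtain ⟨b, β', hb, hβe, r1', r2'⟩ := recB hβn
      have hrec := gP_rec (e := α ++ (e'+1) :: β) (a := a) (b := b) (γ := α' ++ (e'+1) :: β)
        (δ := α ++ (e'+1) :: β') (by rw [hαe]; simp) (by rw [hβe]; simp) ha hb posγ hγ3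
      rw [cut, hcast] at hrec
      refine le_of_mul_le_mul_left ?_ hpos
      rw [hrec]
      have t1 : gP (a :: (α' ++ (e'+1) :: β)) + SL ≤
          gP [e'+1] * gP (2 :: β) * ((α.sum + 1) * gP (α ++ [2])) := by
        rw [r1]; simp only [List.cons_append] at *; linarith
      have t2 : gP (α ++ (e'+1) :: β' ++ [b]) + SR ≤
          gP [e'+1] * gP (α ++ [2]) * ((β.sum + 1) * gP (2 :: β)) := by
        rw [r1']; simp only [List.append_assoc, List.cons_append] at *; linarith
      have t3 := mul_le_mul_of_nonneg_right he' GX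
      linarith

lemma gP_dom' (α β : List ℕ) (e : ℕ) (he : 3 ≤ e) (hα : ∀ x ∈ α, 2 ≤ x) (hβ : ∀ x ∈ β, 2 ≤ x) :
    gP (α ++ e :: β) ≤ gP [e] * (gP (α ++ [2]) * gP (2 :: β)) :=
  gP_dom _ α β e he hα hβ rfl

end Domination

section Upper

/-- the cube root of three -/
noncomputable def th : ℝ := (3 : ℝ) ^ (1 / 3 : ℝ)

lemma th_pos : 0 < th := by unfold th; positivity

lemma th_cube : th ^ 3 = 3 := by
  unfold th
  rw [← Real.rpow_natCast, ← Real.rpow_mul (by norm_num)]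
  norm_num

lemma th_lt : th < 3 / 2 := by
  by_contra! h
  have := pow_le_pow_left₀ (by norm_num) h 3
  rw [th_cube] at this
  norm_num at this

lemma gP_three : gP [3] = 1 := by
  have := gP_single 2 le_rfl
  rw [gP_two] at this
  norm_num at this
  linarith

lemma single_four : ∀ e : ℕ, 4 ≤ e → gP [e] * th ^ e < 3 := by
  intro e he
  induction e, he using Nat.le_induction with
  | base =>
    have := gP_single 3 (by omega)
    rw [gP_three] at this
    norm_num at this
    have h2 : gP [4] = 2 / 3 := by linarith
    have h3 : th ^ 4 = 3 * th := by rw [pow_succ, th_cube]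
    have := th_lt
    rw [h2, h3]; linarith
  | succ e he ih =>
    have h1 := gP_single e (by omega)
    have h2 : (4 : ℝ) ≤ e := by exact_mod_cast he
    have h3 : gP [e+1] = 2 / e * gP [e] := by field_simp; linarith
    have h4 : gP [e+1] * th ^ (e+1) = (2 * th / e) * (gP [e] * th ^ e) := by
      rw [h3, pow_succ]; ring
    have h5 : 2 * th / e ≤ 1 := by
      rw [div_le_one (by linarith)]
      have := th_lt
      linarith
    have h6 : 0 ≤ gP [e] * th ^ e := mul_nonneg (gP_nonneg _) (pow_nonneg th_pos.le _)
    rw [h4]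
    nlinarith

lemma single_bound (e : ℕ) (he : 2 ≤ e) :
    gP [e] * th ^ e ≤ 3 ∧ (3 ≤ gP [e] * th ^ e → e = 3) := by
  rcases (by omega : e = 2 ∨ e = 3 ∨ 4 ≤ e) with rfl | rfl | h
  · rw [gP_two]
    have := th_lt
    have := th_pos
    constructor
    · nlinarith
    · intro h; nlinarith
  · rw [gP_three, th_cube]; norm_num
  · have := single_four e h
    exact ⟨this.le, fun h => absurd h (by linarith)⟩

/-- the alternating probabilities -/
noncomputable def tau (j : ℕ) : ℝ := gP (List.replicate (j+1) 2)

lemma tau_nonneg (j : ℕ) : 0 ≤ tau j := gP_nonneg _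

lemma tau_zero : tau 0 = 1 := gP_two

lemma tau_rec (j : ℕ) (hj : 1 ≤ j) :
    (2 * (j : ℝ) + 1) * tau j = ∑ i ∈ Finset.range j, tau i * tau (j - 1 - i) := by
  have h := gP_rec (e := List.replicate (j+1) 2) (a := 1) (b := 1) (γ := List.replicate j 2)
    (δ := List.replicate j 2) (by rw [List.replicate_succ]) (by rw [List.replicate_succ'])
    le_rfl le_rfl (by intro x hx; rw [List.eq_of_mem_replicate hx]; omega) (by simp; omega)
  have z1 : gP (1 :: List.replicate j 2) = 0 := gP_one (α := []) (by simp; omega)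
  have z2 : gP (List.replicate j 2 ++ [1]) = 0 := gP_one (by simp; omega)
  rw [z1, z2] at h
  simp only [List.sum_replicate, List.length_replicate, smul_eq_mul, zero_add,
    Nat.add_sub_cancel] at h
  push_cast at h
  rw [show 2 * (j : ℝ) + 1 = ((j : ℝ) + 1) * 2 - 1 by ring]
  unfold tau
  rw [h]
  apply Finset.sum_congr rfl
  intro i hi
  rw [Finset.mem_range] at hi
  rw [List.take_replicate, List.drop_replicate, min_eq_left (by omega),
    show j + 1 - (i + 1) = j - 1 - i + 1 by omega]

lemma tau_bound : ∀ k : ℕ, tau (k+1) ≤ (1/3) * (12/25 : ℝ) ^ k := by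
  intro k
  induction k using Nat.strong_induction_on with
  | _ k ih =>
  rcases k with _ | k
  · have := tau_rec 1 le_rfl
    simp [tau_zero] at this
    simp
    linarith
  · have h := tau_rec (k+2) (by omega)
    rw [Finset.sum_range_succ, Finset.sum_range_succ'] at h
    simp only [tau_zero, one_mul, show k + 2 - 1 - (k + 1) = 0 by omega,
      show k + 2 - 1 - 0 = k + 1 by omega, mul_one] at h
    have h1 : ∀ i ∈ Finset.range k, tau (i+1) * tau (k - i) ≤
        (1/9) * ((12/25 : ℝ) ^ k * (25/12)) := by
      intro i hi
      rw [Finset.mem_range] at hi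
      obtain ⟨p, rfl⟩ : ∃ p, k = i + 1 + p := ⟨k - i - 1, by omega⟩
      rw [show i + 1 + p - i = p + 1 by omega]
      calc _ ≤ ((1/3) * (12/25 : ℝ) ^ i) * ((1/3) * (12/25 : ℝ) ^ p) :=
            mul_le_mul (ih i (by omega)) (ih p (by omega)) (tau_nonneg _) (by positivity)
        _ = _ := by rw [pow_add, pow_add]; ring
    have h2 := Finset.sum_le_sum h1
    rw [Finset.sum_const, Finset.card_range, nsmul_eq_mul] at h2
    have h3 := ih k (by omega)
    simp only [show ∀ x, k + 2 - 1 - (x + 1) = k - x by intro x; omega] at h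
    push_cast at h
    have hq : (0:ℝ) < (12/25 : ℝ) ^ k := by positivity
    have hk : (0:ℝ) ≤ k := by positivity
    have hkq : 0 ≤ (k:ℝ) * (12/25 : ℝ) ^ k := by positivity
    have h4 : (2 * ((k:ℝ) + 2) + 1) * tau (k+2) ≤
        (2 * ((k:ℝ) + 2) + 1) * ((1/3) * (12/25 : ℝ) ^ (k+1)) := by
      rw [pow_succ]
      rw [h]; linarith
    exact le_of_mul_le_mul_left h4 (by positivity)

lemma th_sq : th ^ 2 * (12/25) < 1 := by
  have h0 := th_pos
  by_contra! h
  have h1 := pow_le_pow_left₀ (by norm_num) h 3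
  have h2 : (th ^ 2 * (12/25)) ^ 3 = (th ^ 3) ^ 2 * (12/25) ^ 3 := by ring
  rw [h2, th_cube] at h1
  norm_num at h1

lemma one_prod {a b c : ℝ} (ha : 0 ≤ a) (hb : 0 ≤ b) (hc : 0 ≤ c) (ha1 : a ≤ 1) (hb1 : b ≤ 1)
    (hc1 : c ≤ 1) : a * (b * c) ≤ 1 ∧ (1 ≤ a * (b * c) → 1 ≤ a ∧ 1 ≤ b ∧ 1 ≤ c) := by
  have hbc : b * c ≤ 1 := mul_le_one₀ hb1 hc hc1
  have hbc0 : 0 ≤ b * c := mul_nonneg hb hc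
  refine ⟨mul_le_one₀ ha1 hbc0 hbc, fun h => ?_⟩
  have h1 : 1 ≤ b * c := by nlinarith
  refine ⟨by nlinarith, by nlinarith, by nlinarith⟩

lemma mid_bound : ∀ L : ℕ, ∀ mid : List ℕ, mid.length = L → (∀ x ∈ mid, 2 ≤ x) →
    3 * th ^ mid.sum * gP (2 :: (mid ++ [2])) ≤ 1 ∧
    (1 ≤ 3 * th ^ mid.sum * gP (2 :: (mid ++ [2])) → ∀ x ∈ mid, x = 3) := by
  intro L
  induction L using Nat.strong_induction_on with
  | _ L ih =>
  intro mid hL h2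
  by_cases hex : ∃ x ∈ mid, 3 ≤ x
  · obtain ⟨e, he, he3⟩ := hex
    obtain ⟨α, β, rfl⟩ := List.append_of_mem he
    simp at hL
    have hα : ∀ x ∈ α, 2 ≤ x := fun x hx => h2 x (by simp [hx])
    have hβ : ∀ x ∈ β, 2 ≤ x := fun x hx => h2 x (by simp [hx])
    have iα := ih α.length (by omega) α rfl hα
    have iβ := ih β.length (by omega) β rfl hβ
    have se := single_bound e (by omega)
    have dom := gP_dom' (2 :: α) (β ++ [2]) e he3
      (by intro x hx; rcases List.mem_cons.1 hx with rfl | hx; exacts [le_rfl, hα x hx])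
      (by
        intro x hx
        rcases List.mem_append.1 hx with hx | hx
        · exact hβ x hx
        · simp at hx; omega)
    rw [List.cons_append, List.cons_append] at dom
    rw [show 2 :: (α ++ e :: β ++ [2]) = 2 :: (α ++ e :: (β ++ [2])) by simp]
    have t0 := th_pos
    have hs : th ^ (α ++ e :: β).sum = th ^ α.sum * th ^ e * th ^ β.sum := by
      rw [List.sum_append, List.sum_cons, pow_add, pow_add]; ring
    have gA := gP_nonneg (2 :: (α ++ [2]))
    have gB := gP_nonneg (2 :: (β ++ [2]))
    have gE := gP_nonneg [e]
    have key : 3 * th ^ (α ++ e :: β).sum * gP (2 :: (α ++ e :: (β ++ [2]))) ≤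
        (gP [e] * th ^ e / 3) * ((3 * th ^ α.sum * gP (2 :: (α ++ [2]))) *
          (3 * th ^ β.sum * gP (2 :: (β ++ [2])))) := by
      calc _ ≤ 3 * th ^ (α ++ e :: β).sum *
            (gP [e] * (gP (2 :: (α ++ [2])) * gP (2 :: (β ++ [2])))) :=
            mul_le_mul_of_nonneg_left dom (by positivity)
        _ = _ := by rw [hs]; ring
    have op := one_prod (a := gP [e] * th ^ e / 3) (b := 3 * th ^ α.sum * gP (2 :: (α ++ [2])))
      (c := 3 * th ^ β.sum * gP (2 :: (β ++ [2]))) (by positivity) (by positivity) (by positivity)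
      (by linarith [se.1]) iα.1 iβ.1
    refine ⟨key.trans op.1, fun h x hx => ?_⟩
    obtain ⟨o1, o2, o3⟩ := op.2 (h.trans key)
    simp only [List.mem_append, List.mem_cons] at hx
    rcases hx with hx | rfl | hx
    · exact iα.2 o2 x hx
    · exact se.2 (by linarith)
    · exact iβ.2 o3 x hx
  · push Not at hex
    have hr : mid = List.replicate L 2 := by
      rw [List.eq_replicate_iff]
      refine ⟨hL, fun x hx => ?_⟩
      have := h2 x hx
      have := hex x hx
      omega
    have hr2 : 2 :: (mid ++ [2]) = List.replicate (L + 1 + 1) 2 := by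
      rw [hr, ← List.replicate_succ', List.replicate_succ (n := L+1)]
    have hsum : mid.sum = 2 * L := by rw [hr]; simp; ring
    rw [hr2, hsum]
    have tb := tau_bound L
    unfold tau at tb
    have t0 := th_pos
    have key : 3 * th ^ (2 * L) * gP (List.replicate (L+1+1) 2) ≤ (th ^ 2 * (12/25)) ^ L := by
      calc _ ≤ 3 * th ^ (2 * L) * ((1/3) * (12/25 : ℝ) ^ L) :=
            mul_le_mul_of_nonneg_left tb (by positivity)
        _ = _ := by rw [mul_pow, pow_mul]; ring
    have hsq := th_sq
    refine ⟨key.trans (pow_le_one₀ (by positivity) hsq.le), fun h x hx => ?_⟩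
    exfalso
    have hL0 : L ≠ 0 := by
      rintro rfl
      simp at hr
      simp [hr] at hx
    have := pow_lt_one₀ (by positivity) hsq hL0
    linarith

lemma head_dom (a : ℕ) (ha : 2 ≤ a) (β : List ℕ) (hβ : ∀ x ∈ β, 2 ≤ x) :
    gP (a :: β) ≤ gP [a] * gP (2 :: β) := by
  by_cases h : a = 2
  · subst h; rw [gP_two, one_mul]
  · have := gP_dom' [] β a (by omega) (by simp) hβ
    simpa [gP_two] using this

lemma last_dom (a : ℕ) (ha : 2 ≤ a) (α : List ℕ) (hα : ∀ x ∈ α, 2 ≤ x) :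
    gP (α ++ [a]) ≤ gP [a] * gP (α ++ [2]) := by
  by_cases h : a = 2
  · subst h; rw [gP_two, one_mul]
  · have := gP_dom' α [] a (by omega) hα (by simp)
    simpa [gP_two] using this

lemma upper (e : List ℕ) (hne : 2 ≤ e.sum) (pos : ∀ x ∈ e, 0 < x) :
    gP e * th ^ e.sum ≤ 3 ∧ (3 ≤ gP e * th ^ e.sum → ∀ x ∈ e, x = 3) := by
  have t0 := th_pos
  rcases e with _ | ⟨a, r⟩
  · simp at hne
  rcases List.eq_nil_or_concat r with rfl | ⟨mid, b, rfl⟩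
  · simpa using single_bound a (by simpa using hne)
  by_cases h1 : 1 ∈ a :: (mid ++ [b])
  · obtain ⟨α, β, h⟩ := List.append_of_mem h1
    have : α ++ β ≠ [] := by
      have := congrArg List.length h
      simp at this
      intro h'
      simp at h'
      obtain ⟨rfl, rfl⟩ := h'
      simp at this
    rw [List.concat_eq_append, h, gP_one this, zero_mul]
    norm_num
  rw [List.concat_eq_append] at *
  have h2 : ∀ x ∈ a :: (mid ++ [b]), 2 ≤ x := by
    intro x hx
    have := pos x hx
    have : x ≠ 1 := by rintro rfl; exact h1 hx
    omega
  have ha : 2 ≤ a := h2 a (by simp)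
  have hb : 2 ≤ b := h2 b (by simp)
  have hm : ∀ x ∈ mid, 2 ≤ x := fun x hx => h2 x (by simp [hx])
  have d1 := head_dom a ha (mid ++ [b]) (fun x hx => h2 x (by simp at hx ⊢; tauto))
  have d2 := last_dom b hb (2 :: mid)
    (by intro x hx; rcases List.mem_cons.1 hx with rfl | hx; exacts [le_rfl, hm x hx])
  rw [List.cons_append, List.cons_append] at d2
  have mb := mid_bound _ mid rfl hm
  have sa := single_bound a ha
  have sb := single_bound b hb
  have ga := gP_nonneg [a]
  have gb := gP_nonneg [b]
  have gm := gP_nonneg (2 :: (mid ++ [2]))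
  have key : gP (a :: (mid ++ [b])) * th ^ (a :: (mid ++ [b])).sum ≤
      3 * ((gP [a] * th ^ a / 3) * ((gP [b] * th ^ b / 3) *
        (3 * th ^ mid.sum * gP (2 :: (mid ++ [2]))))) := by
    calc _ ≤ (gP [a] * (gP [b] * gP (2 :: (mid ++ [2])))) * th ^ (a :: (mid ++ [b])).sum := by
          apply mul_le_mul_of_nonneg_right _ (by positivity)
          exact d1.trans (mul_le_mul_of_nonneg_left d2 ga)
      _ = _ := by
          rw [List.sum_cons, List.sum_append, pow_add, pow_add]
          simp
          ring
  have op := one_prod (a := gP [a] * th ^ a / 3) (b := gP [b] * th ^ b / 3)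
    (c := 3 * th ^ mid.sum * gP (2 :: (mid ++ [2]))) (by positivity) (by positivity) (by positivity)
    (by linarith [sa.1]) (by linarith [sb.1]) mb.1
  refine ⟨by linarith [op.1], fun h x hx => ?_⟩
  obtain ⟨o1, o2, o3⟩ := op.2 (by linarith)
  simp only [List.mem_append, List.mem_cons, List.not_mem_nil, or_false] at hx
  rcases hx with rfl | hx | rfl
  · exact sa.2 (by linarith)
  · exact mb.2 o3 x hx
  · exact sb.2 (by linarith)

end Upper

section Lower

lemma rep_pos {k : ℕ} {x : ℕ} (hx : x ∈ List.replicate k 3) : 0 < x := by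
  rw [List.eq_of_mem_replicate hx]; omega

lemma sum_const_pow {k : ℕ} {f : ℕ → ℝ} {v : ℝ} (h : ∀ i < k, f i = v) :
    ∑ i ∈ Finset.range k, f i = k * v := by
  rw [Finset.sum_congr rfl (fun i hi => h i (Finset.mem_range.1 hi)), Finset.sum_const,
    Finset.card_range, nsmul_eq_mul]

lemma third_mul {k i j : ℕ} (h : i + j = k) : (1/3 : ℝ) ^ i * (1/3 : ℝ) ^ j = (1/3 : ℝ) ^ k := by
  rw [← pow_add, h]

lemma threes_z (k : ℕ) (ih : ∀ j ≤ k, gP (2 :: List.replicate j 3) = (1/3 : ℝ) ^ j ∧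
    gP (List.replicate j 3 ++ [2]) = (1/3 : ℝ) ^ j) :
    gP (2 :: (List.replicate k 3 ++ [2])) = (1/3 : ℝ) ^ (k+1) := by
  have h := gP_rec (e := 2 :: (List.replicate k 3 ++ [2])) (a := 1) (b := 1)
    (γ := List.replicate k 3 ++ [2]) (δ := 2 :: List.replicate k 3) rfl rfl
    le_rfl le_rfl ?_ (by simp; omega)
  · have z1 : gP (1 :: (List.replicate k 3 ++ [2])) = 0 := gP_one (α := []) (by simp)
    have z2 : gP (2 :: List.replicate k 3 ++ [1]) = 0 := gP_one (by simp)
    rw [z1, z2, show (2 :: (List.replicate k 3 ++ [2])).length - 1 = k + 1 by simp,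
      sum_const_pow (v := (1/3 : ℝ) ^ k)] at h
    · have hs : (((2 :: (List.replicate k 3 ++ [2])).sum : ℕ) : ℝ) - 1 = 3 * ((k:ℝ) + 1) := by
        simp; ring
      rw [hs] at h
      push_cast at h
      have hk : ((k:ℝ) + 1) ≠ 0 := by positivity
      have : ((k:ℝ) + 1) * (3 * gP (2 :: (List.replicate k 3 ++ [2])) - (1/3 : ℝ) ^ k) = 0 := by
        linarith
      have := (mul_eq_zero.1 this).resolve_left hk
      rw [pow_succ]; linarith
    · intro i hi
      rw [List.take_succ_cons, List.drop_succ_cons,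
        List.take_append_of_le_length (by simp; omega),
        List.drop_append_of_le_length (by simp; omega), List.take_replicate, List.drop_replicate,
        min_eq_left (by omega), (ih i (by omega)).1, (ih (k - i) (by omega)).2]
      exact third_mul (by omega)
  · intro x hx
    simp only [List.mem_append, List.mem_cons, List.not_mem_nil, or_false] at hx
    rcases hx with rfl | hx | rfl
    · omega
    · exact rep_pos hx
    · omega

lemma threes (k : ℕ) : gP (List.replicate (k+1) 3) = (1/3 : ℝ) ^ k ∧
    gP (2 :: List.replicate k 3) = (1/3 : ℝ) ^ k ∧
    gP (List.replicate k 3 ++ [2]) = (1/3 : ℝ) ^ k := by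
  induction k using Nat.strong_induction_on with
  | _ k ih =>
  have hy : gP (2 :: List.replicate k 3) = (1/3 : ℝ) ^ k := by
    rcases k with _ | k
    · simpa using gP_two
    · have h := gP_rec (e := 2 :: List.replicate (k+1) 3) (a := 1) (b := 2)
        (γ := List.replicate (k+1) 3) (δ := 2 :: List.replicate k 3) rfl
        (by rw [List.replicate_succ']; rfl) le_rfl (by omega) ?_ (by simp; omega)
      · have z1 : gP (1 :: List.replicate (k+1) 3) = 0 := gP_one (α := []) (by simp)
        have z2 := threes_z k (fun j hj => (ih j (by omega)).2)
        rw [z1, List.cons_append, z2,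
          show (2 :: List.replicate (k+1) 3).length - 1 = k + 1 by simp,
          sum_const_pow (v := (1/3 : ℝ) ^ k)] at h
        · have hs : (((2 :: List.replicate (k+1) 3).sum : ℕ) : ℝ) - 1 = 3 * (k:ℝ) + 4 := by
            simp; ring
          rw [hs] at h
          push_cast at h
          have hk : (3 * (k:ℝ) + 4) ≠ 0 := by positivity
          apply mul_left_cancel₀ hk
          rw [h, pow_succ]; ring
        · intro i hi
          rw [List.take_succ_cons, List.drop_succ_cons, List.take_replicate, List.drop_replicate,
            min_eq_left (by omega), show k + 1 - i = (k - i) + 1 by omega,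
            (ih i (by omega)).2.1, (ih (k - i) (by omega)).1]
          exact third_mul (by omega)
      · intro x hx
        rcases List.mem_cons.1 hx with rfl | hx
        · omega
        · exact rep_pos hx
  have hy' : gP (List.replicate k 3 ++ [2]) = (1/3 : ℝ) ^ k := by
    rcases k with _ | k
    · simpa using gP_two
    · have h := gP_rec (e := List.replicate (k+1) 3 ++ [2]) (a := 2) (b := 1)
        (γ := List.replicate k 3 ++ [2]) (δ := List.replicate (k+1) 3)
        (by rw [List.replicate_succ]; rfl) rfl (by omega) le_rfl ?_ (by simp; omega)
      · have z1 : gP (List.replicate (k+1) 3 ++ [1]) = 0 := gP_one (by simp)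
        have z2 := threes_z k (fun j hj => (ih j (by omega)).2)
        rw [z1, z2, show (List.replicate (k+1) 3 ++ [2] : List ℕ).length - 1 = k + 1 by simp,
          sum_const_pow (v := (1/3 : ℝ) ^ k)] at h
        · have hs : (((List.replicate (k+1) 3 ++ [2]).sum : ℕ) : ℝ) - 1 = 3 * (k:ℝ) + 4 := by
            simp; ring
          rw [hs] at h
          push_cast at h
          have hk : (3 * (k:ℝ) + 4) ≠ 0 := by positivity
          apply mul_left_cancel₀ hk
          rw [h, pow_succ]; ring
        · intro i hi
          rw [List.take_append_of_le_length (by simp; omega),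
            List.drop_append_of_le_length (by simp; omega), List.take_replicate,
            List.drop_replicate, min_eq_left (by omega), show k + 1 - (i + 1) = k - i by omega,
            (ih i (by omega)).1, (ih (k - i) (by omega)).2.2]
          exact third_mul (by omega)
      · intro x hx
        simp only [List.mem_append, List.mem_singleton] at hx
        rcases hx with hx | rfl
        · exact rep_pos hx
        · omega
  refine ⟨?_, hy, hy'⟩
  have h := gP_rec (e := List.replicate (k+1) 3) (a := 2) (b := 2)
    (γ := List.replicate k 3) (δ := List.replicate k 3)
    (by rw [List.replicate_succ]) (by rw [List.replicate_succ']) (by omega) (by omega)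
    (fun x hx => rep_pos hx) (by simp)
  rw [hy, hy', show (List.replicate (k+1) 3).length - 1 = k by simp,
    sum_const_pow (v := 3 * (1/3 : ℝ) ^ k)] at h
  · have hs : (((List.replicate (k+1) 3).sum : ℕ) : ℝ) - 1 = 3 * (k:ℝ) + 2 := by
      simp; ring
    rw [hs] at h
    have hk : (3 * (k:ℝ) + 2) ≠ 0 := by positivity
    apply mul_left_cancel₀ hk
    rw [h]; ring
  · intro i hi
    obtain ⟨p, rfl⟩ : ∃ p, k = i + 1 + p := ⟨k - i - 1, by omega⟩
    rw [List.take_replicate, List.drop_replicate, min_eq_left (by omega),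
      show i + 1 + p + 1 - (i + 1) = p + 1 by omega,
      (ih i (by omega)).1, (ih p (by omega)).1, pow_add, pow_add]
    ring

end Lower

section Bridge

lemma lpk_ofFn {n : ℕ} (σ : Equiv.Perm (Fin n)) (i : ℕ) : lpk (List.ofFn σ) i ↔ IsPeak σ i := by
  constructor
  · rintro ⟨j, a, b, c, rfl, h1, h2, h3, hab, hcb⟩
    rw [List.getElem?_eq_some_iff] at h1 h2 h3
    obtain ⟨l1, rfl⟩ := h1
    obtain ⟨l2, rfl⟩ := h2
    obtain ⟨l3, rfl⟩ := h3
    have l4 : j + 2 < n := by simpa using l3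
    simp only [List.getElem_ofFn] at *
    exact ⟨by omega, l4, hab, hcb⟩
  · rintro ⟨h2, h3, hab, hcb⟩
    obtain ⟨j, rfl⟩ : ∃ j, i = j + 2 := ⟨i - 2, by omega⟩
    refine ⟨j, σ ⟨j, by omega⟩, σ ⟨j+1, by omega⟩, σ ⟨j+2, by omega⟩, rfl, ?_, ?_, ?_, hab, hcb⟩
    all_goals
      rw [List.getElem?_eq_some_iff]
      refine ⟨by simp; omega, by simp⟩

lemma peakSet_iff {n : ℕ} (σ : Equiv.Perm (Fin n)) (S : Finset ℕ) :
    peakSet σ = S ↔ LP (List.ofFn σ) S := by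
  classical
  unfold peakSet LP
  rw [Finset.ext_iff]
  apply forall_congr'
  intro i
  rw [lpk_ofFn, Finset.mem_filter, Finset.mem_range]
  have : IsPeak σ i → i < n := fun ⟨_, h, _⟩ => h
  tauto

lemma numPeakSet_eq (n : ℕ) (S : Finset ℕ) : numPeakSet n S = cN n S := by
  classical
  unfold numPeakSet cN cnt
  rw [Nat.card_eq_fintype_card, Fintype.card_subtype]
  refine Finset.card_bij (fun σ _ => List.ofFn σ) ?_ ?_ ?_
  · intro σ hσ
    rw [Finset.mem_filter] at hσ ⊢
    refine ⟨lists_iff.2 ⟨List.nodup_ofFn.2 σ.injective, ?_⟩, (peakSet_iff σ S).1 hσ.2⟩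
    ext x
    simp only [List.mem_toFinset, List.mem_ofFn, Finset.mem_univ, iff_true]
    exact ⟨σ.symm x, by simp⟩
  · intro σ _ τ _ h
    exact DFunLike.coe_injective (List.ofFn_injective h)
  · intro l hl
    rw [Finset.mem_filter] at hl
    have hlen : l.length = n := by
      rw [length_of_lists hl.1]; simp
    have hnd := (lists_iff.1 hl.1).1
    let f : Fin n → Fin n := fun i => l[i.1]'(by rw [hlen]; exact i.2)
    have hf : List.ofFn f = l := by
      apply List.ext_getElem
      · simp [hlen]
      · intro i h1 h2
        simp [f]
    have inj : Function.Injective f := by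
      rw [← List.nodup_ofFn, hf]; exact hnd
    let σ : Equiv.Perm (Fin n) := Equiv.ofBijective f (Finite.injective_iff_bijective.1 inj)
    have hσ : List.ofFn σ = l := hf
    refine ⟨σ, ?_, hσ⟩
    rw [Finset.mem_filter]
    refine ⟨Finset.mem_univ _, ?_⟩
    rw [peakSet_iff, hσ]
    exact hl.2

lemma Pcomp_eq (δ : List ℕ) (b : ℕ) :
    (Pcomp (δ ++ [b]) : ℝ) = ((δ ++ [b]).sum.factorial : ℝ) * gP (δ ++ [b+1]) := by
  unfold Pcomp gP
  rw [numPeakSet_eq, cP_concat δ b (b+1),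
    show (δ ++ [b+1]).sum - 1 = (δ ++ [b]).sum by simp]
  field_simp

end Bridge

section Final

lemma th_pow (ℓ : ℕ) : th ^ (3 * ℓ + 3) = 3 * 3 ^ ℓ := by
  rw [pow_add, pow_mul, th_cube]; ring

lemma comp_upper (ℓ : ℕ) (δ : List ℕ) (b : ℕ) (h : IsComposition (3 * ℓ + 2) (δ ++ [b])) :
    gP (δ ++ [b+1]) ≤ (1/3 : ℝ) ^ ℓ ∧
    ((1/3 : ℝ) ^ ℓ ≤ gP (δ ++ [b+1]) → ∀ x ∈ δ ++ [b+1], x = 3) := by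
  obtain ⟨pos, hs⟩ := h
  have hs' : (δ ++ [b+1]).sum = 3 * ℓ + 3 := by
    simp at hs ⊢; omega
  have pos' : ∀ x ∈ δ ++ [b+1], 0 < x := by
    intro x hx
    simp only [List.mem_append, List.mem_singleton] at hx
    rcases hx with hx | rfl
    · exact pos x (by simp [hx])
    · omega
  have hu := upper (δ ++ [b+1]) (by omega) pos'
  rw [hs', th_pow] at hu
  have h3 : (0:ℝ) < 3 ^ ℓ := by positivity
  have h4 : (1/3 : ℝ) ^ ℓ = 1 / 3 ^ ℓ := by rw [div_pow, one_pow]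
  rw [h4]
  constructor
  · rw [le_div_iff₀ h3]; linarith [hu.1]
  · intro h
    apply hu.2
    rw [div_le_iff₀ h3] at h
    linarith

lemma target_value (ℓ : ℕ) : (Pcomp (List.replicate ℓ 3 ++ [2]) : ℝ) =
    ((3 * ℓ + 2).factorial : ℝ) * (1/3 : ℝ) ^ ℓ := by
  rw [Pcomp_eq, ← List.replicate_succ', (threes ℓ).1]
  congr 3
  simp
  ring

lemma comp_snoc {n : ℕ} {c : List ℕ} (hn : n ≠ 0) (h : IsComposition n c) :
    ∃ δ b, c = δ ++ [b] := by
  rcases List.eq_nil_or_concat c with rfl | ⟨δ, b, rfl⟩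
  · exact absurd h.2.symm (by simpa using hn)
  · exact ⟨δ, b, by simp⟩

end Final

theorem most_frequent_peak_set_mod_two (ℓ n : ℕ) (hℓ : 2 ≤ ℓ) (hn : n = 3 * ℓ + 2)
    (c : List ℕ) (hc : IsComposition n c) :
    IsMaximal c ↔ c = List.replicate ℓ 3 ++ [2] := by
  subst hn
  have hf : (0:ℝ) < ((3 * ℓ + 2).factorial : ℝ) := by positivity
  constructor
  · intro hmax
    have ht : IsComposition c.sum (List.replicate ℓ 3 ++ [2]) := by
      refine ⟨?_, by rw [hc.2]; simp; ring⟩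
      intro x hx
      simp only [List.mem_append, List.mem_singleton] at hx
      rcases hx with hx | rfl
      · exact rep_pos hx
      · omega
    have h1 : (Pcomp (List.replicate ℓ 3 ++ [2]) : ℝ) ≤ Pcomp c := by exact_mod_cast hmax _ ht
    obtain ⟨δ, b, rfl⟩ := comp_snoc (by omega) hc
    rw [target_value, Pcomp_eq, hc.2] at h1
    have h2 := (comp_upper ℓ δ b hc).2 (le_of_mul_le_mul_left h1 hf)
    have hb : b + 1 = 3 := h2 _ (by simp)
    obtain rfl : b = 2 := by omega
    have hδ : δ = List.replicate δ.length 3 :=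
      List.eq_replicate_iff.2 ⟨rfl, fun x hx => h2 x (by simp [hx])⟩
    have hs := hc.2
    rw [hδ] at hs
    simp at hs
    have : δ.length = ℓ := by omega
    rw [this] at hδ
    rw [← hδ]
  · rintro rfl b hb
    rw [hc.2] at hb
    obtain ⟨δ, b, rfl⟩ := comp_snoc (by omega) hb
    have h1 : (Pcomp (δ ++ [b]) : ℝ) ≤ Pcomp (List.replicate ℓ 3 ++ [2]) := by
      rw [target_value, Pcomp_eq, hb.2]
      exact mul_le_mul_of_nonneg_left (comp_upper ℓ δ b hb).1 hf.le
    exact_mod_cast h1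
end

section
/- Let ℓ ≥ 2 and n = 3ℓ. The maximum of P(S;n) over all subsets S of {1,…,n} equals (1/5)·3^{2−ℓ}·n!, i.e. 5·3^{ℓ−2} times the maximum equals n!. -/
/-- list peak at (0-based) index `i`. -/
def PKL {α : Type*} [LinearOrder α] (l : List α) (i : ℕ) : Prop :=
  ∃ a b c, 0 < i ∧ l[i-1]? = some a ∧ l[i]? = some b ∧ l[i+1]? = some c ∧ a < b ∧ c < b

open Classical in
/-- Probability of the peak pattern `S` on the window `[s, s+n)`. -/
noncomputable def qq (S : ℕ → Prop) : ℕ → ℕ → ℝ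
  | 0, _ => 1
  | n+1, s => (1 / ((n : ℝ) + 1)) * ∑ j : Fin (n+1),
      if (S (s + j) ↔ (0 < (j : ℕ) ∧ (j : ℕ) < n)) then
        qq S j s * qq S (n - j) (s + j + 1) else 0
termination_by n _ => n
decreasing_by
  · exact j.2
  · omega

section
variable {α : Type*} [LinearOrder α]

lemma PKL_left (l1 l2 : List α) (m : α) (h1 : ∀ x ∈ l1, x < m) (i : ℕ) (hi : i < l1.length) :
    PKL (l1 ++ m :: l2) i ↔ PKL l1 i := by
  unfold PKL
  have e1 : (l1 ++ m :: l2)[i-1]? = l1[i-1]? := List.getElem?_append_left (by omega)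
  have e2 : (l1 ++ m :: l2)[i]? = l1[i]? := List.getElem?_append_left (by omega)
  rw [e1, e2]
  rcases Nat.lt_or_ge (i+1) l1.length with h | h
  · rw [List.getElem?_append_left h]
  · have hh : i + 1 = l1.length := by omega
    rw [List.getElem?_append_right h]
    simp only [hh, Nat.sub_self, List.getElem?_cons_zero]
    constructor
    · rintro ⟨a, b, c, h0, ha, hb, hc, hab, hcb⟩
      have := h1 b (List.mem_of_getElem? hb)
      simp at hc
      subst hc
      exact absurd hcb (not_lt.mpr this.le)
    · rintro ⟨a, b, c, h0, ha, hb, hc, hab, hcb⟩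
      simp at hc

lemma PKL_mid (l1 l2 : List α) (m : α) (h1 : ∀ x ∈ l1, x < m) (h2 : ∀ x ∈ l2, x < m) :
    PKL (l1 ++ m :: l2) l1.length ↔ (0 < l1.length ∧ 0 < l2.length) := by
  unfold PKL
  constructor
  · rintro ⟨a, b, c, h0, ha, hb, hc, hab, hcb⟩
    refine ⟨h0, ?_⟩
    rw [List.getElem?_append_right (by omega)] at hc
    simp at hc
    exact List.length_pos_of_mem (List.mem_of_getElem? hc)
  · rintro ⟨ha, hb⟩
    refine ⟨l1[l1.length - 1], m, l2[0], ha, ?_, ?_, ?_, h1 _ (List.getElem_mem _), h2 _ (List.getElem_mem _)⟩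
    · rw [List.getElem?_append_left (by omega)]; simp
    · simp
    · rw [List.getElem?_append_right (by omega)]; simp

lemma PKL_right (l1 l2 : List α) (m : α) (h2 : ∀ x ∈ l2, x < m) (k : ℕ) :
    PKL (l1 ++ m :: l2) (l1.length + 1 + k) ↔ PKL l2 k := by
  unfold PKL
  have e2 : (l1 ++ m :: l2)[l1.length + 1 + k]? = l2[k]? := by
    rw [List.getElem?_append_right (by omega), show l1.length + 1 + k - l1.length = k + 1 by omega]
    simp
  have e3 : (l1 ++ m :: l2)[l1.length + 1 + k + 1]? = l2[k+1]? := by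
    rw [List.getElem?_append_right (by omega), show l1.length + 1 + k + 1 - l1.length = k + 1 + 1 by omega]
    simp
  rw [e2, e3]
  rcases k with _ | k
  · have e1 : (l1 ++ m :: l2)[l1.length + 1 + 0 - 1]? = some m := by simp
    rw [e1]
    constructor
    · rintro ⟨a, b, c, h0, ha, hb, hc, hab, hcb⟩
      have := h2 b (List.mem_of_getElem? hb)
      simp at ha
      subst ha
      exact absurd hab (not_lt.mpr this.le)
    · rintro ⟨a, b, c, h0, ha, hb, hc, hab, hcb⟩
      omega
  · have e1 : (l1 ++ m :: l2)[l1.length + 1 + (k+1) - 1]? = l2[k]? := by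
      rw [List.getElem?_append_right (by omega), show l1.length + 1 + (k+1) - 1 - l1.length = k + 1 by omega]
      simp
    rw [e1]
    simp

open Classical in
/-- arrangements of `A` with peak pattern `S` on window starting at `s`. -/
noncomputable def TT (S : ℕ → Prop) (A : Finset α) (s : ℕ) : Finset (List α) :=
  A.val.lists.toFinset.filter (fun l => ∀ i < A.card, (PKL l i ↔ S (s + i)))

lemma mem_TT (S : ℕ → Prop) (A : Finset α) (s : ℕ) (l : List α) :
    l ∈ TT S A s ↔ (A.val = (l : Multiset α) ∧ ∀ i < A.card, (PKL l i ↔ S (s + i))) := by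
  classical
  unfold TT
  rw [Finset.mem_filter, Multiset.mem_toFinset, Multiset.mem_lists_iff]
  rfl

lemma TT_mem {A : Finset α} {l : List α} (h : A.val = (l : Multiset α)) (x : α) :
    x ∈ l ↔ x ∈ A := by
  rw [← Finset.mem_val, h]; rfl

open Classical in
lemma TT_card_step (S : ℕ → Prop) (A : Finset α) (s n : ℕ) (hA : A.card = n + 1) (m : α) (hm : m ∈ A)
    (hmax : ∀ x ∈ A, x ≤ m) :
    (TT S A s).card = ∑ B ∈ (A.erase m).powerset,
      if (S (s + B.card) ↔ (0 < B.card ∧ B.card < n)) then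
        (TT S B s).card * (TT S ((A.erase m) \ B) (s + B.card + 1)).card else 0 := by
  have hlt : ∀ x ∈ A.erase m, x < m := fun x hx =>
    lt_of_le_of_ne (hmax x (Finset.mem_of_mem_erase hx)) (Finset.ne_of_mem_erase hx)
  rw [← Finset.sum_filter]
  simp_rw [← Finset.card_product]
  rw [← Finset.card_sigma]
  symm
  have key : ∀ (B : Finset α) (l1 l2 : List α), B ⊆ A.erase m → B.val = (l1 : Multiset α) →
      ((A.erase m) \ B).val = (l2 : Multiset α) → A.val = ((l1 ++ m :: l2 : List α) : Multiset α) ∧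
      ((∀ i < A.card, (PKL (l1 ++ m :: l2) i ↔ S (s + i))) ↔
        ((S (s + B.card) ↔ (0 < B.card ∧ B.card < n)) ∧ (∀ i < B.card, (PKL l1 i ↔ S (s + i))) ∧
          (∀ i < ((A.erase m) \ B).card, (PKL l2 i ↔ S (s + B.card + 1 + i))))) := by
    intro B l1 l2 hB h1 h2
    have hc1 : l1.length = B.card := by rw [Finset.card_def, h1]; rfl
    have hc2 : l2.length = ((A.erase m) \ B).card := by rw [Finset.card_def, h2]; rfl
    have hcs : B.card + ((A.erase m) \ B).card = n := by
      rw [add_comm, Finset.card_sdiff_add_card_eq_card hB, Finset.card_erase_of_mem hm, hA]; rfl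
    have hl1 : ∀ x ∈ l1, x < m := fun x hx => hlt x (hB ((TT_mem h1 x).1 hx))
    have hl2 : ∀ x ∈ l2, x < m := fun x hx =>
      hlt x (Finset.sdiff_subset ((TT_mem h2 x).1 hx))
    constructor
    · have e : A.val = m ::ₘ (A.erase m).val := by
        rw [← Finset.insert_val_of_notMem (Finset.notMem_erase m A), Finset.insert_erase hm]
      have e2 : (A.erase m).val = B.val + ((A.erase m) \ B).val := by
        rw [Finset.sdiff_val, add_tsub_cancel_of_le (Finset.val_le_iff.2 hB)]
      rw [e, e2, h1, h2, Multiset.coe_add, Multiset.cons_coe]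
      exact Multiset.coe_eq_coe.2 List.perm_middle.symm
    · constructor
      · intro h
        refine ⟨?_, ?_, ?_⟩
        · rw [← h B.card (by omega), ← hc1, PKL_mid l1 l2 m hl1 hl2]
          omega
        · intro i hi
          rw [← h i (by omega), PKL_left l1 l2 m hl1 i (by omega)]
        · intro i hi
          have := h (B.card + 1 + i) (by omega)
          rw [← hc1, PKL_right l1 l2 m hl2] at this
          rw [this, hc1]
          simp only [add_assoc]
      · rintro ⟨ha, hb, hc⟩ i hi
        rcases lt_trichotomy i B.card with h | h | h
        · rw [PKL_left l1 l2 m hl1 i (by omega)]; exact hb i h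
        · subst h
          rw [ha, ← hc1, PKL_mid l1 l2 m hl1 hl2]
          omega
        · obtain ⟨k, rfl⟩ : ∃ k, i = B.card + 1 + k := ⟨i - B.card - 1, by omega⟩
          have := hc k (by omega)
          rw [← hc1, PKL_right l1 l2 m hl2, this, hc1]
          simp only [add_assoc]
  refine Finset.card_bij (fun x _ => x.2.1 ++ m :: x.2.2) ?_ ?_ ?_
  · rintro ⟨B, l1, l2⟩ h
    simp only [Finset.mem_sigma, Finset.mem_filter, Finset.mem_powerset, Finset.mem_product, mem_TT] at h
    obtain ⟨⟨hB, hS⟩, ⟨h1, h1'⟩, h2, h2'⟩ := h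
    have := key B l1 l2 hB h1 h2
    rw [mem_TT]
    exact ⟨this.1, this.2.2 ⟨hS, h1', h2'⟩⟩
  · rintro ⟨B, l1, l2⟩ h ⟨B', l1', l2'⟩ h' heq
    simp only [Finset.mem_sigma, Finset.mem_filter, Finset.mem_powerset, Finset.mem_product, mem_TT] at h h'
    obtain ⟨⟨hB, hS⟩, ⟨h1, h1'⟩, h2, h2'⟩ := h
    obtain ⟨⟨hB', hS'⟩, ⟨k1, k1'⟩, k2, k2'⟩ := h'
    have n1 : m ∉ l1 := fun hx => lt_irrefl m (hlt m (hB ((TT_mem h1 m).1 hx)))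
    have n2 : m ∉ l2 := fun hx => lt_irrefl m (hlt m (Finset.sdiff_subset ((TT_mem h2 m).1 hx)))
    have n1' : m ∉ l1' := fun hx => lt_irrefl m (hlt m (hB' ((TT_mem k1 m).1 hx)))
    simp only at heq
    have e : l1 = l1' ∧ l2 = l2' := by
      rw [List.append_eq_append_iff] at heq
      rcases heq with ⟨a, ha, hb⟩ | ⟨a, ha, hb⟩
      · rcases a with _ | ⟨x, a⟩
        · simp_all
        · simp at hb
          exact absurd (by rw [ha, hb.1]; simp) n1'
      · rcases a with _ | ⟨x, a⟩
        · simp_all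
        · simp at hb
          exact absurd (by rw [ha, hb.1]; simp) n1
    obtain ⟨rfl, rfl⟩ := e
    have : B = B' := Finset.val_injective (h1.trans k1.symm)
    subst this
    rfl
  · intro l hl
    rw [mem_TT] at hl
    obtain ⟨hl, hl'⟩ := hl
    obtain ⟨l1, l2, rfl⟩ := List.append_of_mem ((TT_mem hl m).2 hm)
    have hnd : (l1 ++ m :: l2).Nodup := by
      have := A.nodup
      rw [hl] at this
      exact Multiset.coe_nodup.1 this
    have hmem := TT_mem hl
    have hd := List.nodup_append.1 hnd
    have hd2 := List.nodup_cons.1 hd.2.1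
    have hB1 : (l1.toFinset).val = (l1 : Multiset α) := by
      simp [List.toFinset_val, hd.1.dedup]
    have hsub : l1.toFinset ⊆ A.erase m := by
      intro x hx
      rw [List.mem_toFinset] at hx
      rw [Finset.mem_erase]
      refine ⟨hd.2.2 x hx m (by simp), (hmem x).1 (by simp [hx])⟩
    have hB2 : ((A.erase m) \ l1.toFinset) = l2.toFinset := by
      ext x
      simp only [Finset.mem_sdiff, Finset.mem_erase, List.mem_toFinset, ← hmem x, List.mem_append,
        List.mem_cons]
      constructor
      · tauto
      · intro hx
        refine ⟨⟨?_, by tauto⟩, ?_⟩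
        · rintro rfl; exact hd2.1 hx
        · intro hx1
          exact hd.2.2 x hx1 x (by simp [hx]) rfl
    have hB2' : ((A.erase m) \ l1.toFinset).val = (l2 : Multiset α) := by
      rw [hB2]
      simp [List.toFinset_val, hd2.2.dedup]
    have K := (key l1.toFinset l1 l2 hsub hB1 hB2').2.1 hl'
    refine ⟨⟨l1.toFinset, l1, l2⟩, ?_, rfl⟩
    simp only [Finset.mem_sigma, Finset.mem_filter, Finset.mem_powerset, Finset.mem_product, mem_TT]
    exact ⟨⟨hsub, K.1⟩, ⟨hB1, K.2.1⟩, hB2', K.2.2⟩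

theorem TT_card (S : ℕ → Prop) : ∀ (n : ℕ) (A : Finset α) (s : ℕ), A.card = n →
    ((TT S A s).card : ℝ) = (n.factorial : ℝ) * qq S n s := by
  classical
  intro n
  induction n using Nat.strong_induction_on with
  | _ n ih =>
  intro A s hA
  rcases n with _ | n
  · have : A = ∅ := Finset.card_eq_zero.1 hA
    subst this
    have : TT S (∅ : Finset α) s = {[]} := by
      ext l
      rw [mem_TT]
      simp [eq_comm]
    rw [this, qq]
    simp
  · have hne : A.Nonempty := Finset.card_pos.1 (by omega)
    have hc : (A.erase (A.max' hne)).card = n := by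
      rw [Finset.card_erase_of_mem (Finset.max'_mem _ _), hA]; rfl
    rw [TT_card_step S A s n hA (A.max' hne) (Finset.max'_mem _ _) (fun x hx => Finset.le_max' _ _ hx)]
    push_cast
    have : ∀ B ∈ (A.erase (A.max' hne)).powerset,
      ((if (S (s + B.card) ↔ (0 < B.card ∧ B.card < n)) then
        ((TT S B s).card : ℝ) * ((TT S ((A.erase (A.max' hne)) \ B) (s + B.card + 1)).card : ℝ) else 0) : ℝ)
       = (fun j => if (S (s + j) ↔ (0 < j ∧ j < n)) then
          ((j.factorial : ℝ) * qq S j s) * (((n-j).factorial : ℝ) * qq S (n-j) (s + j + 1)) else 0) B.card := by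
      intro B hB
      have hB' := Finset.mem_powerset.1 hB
      have h1 : B.card ≤ n := hc ▸ Finset.card_le_card hB'
      have h2 : (A.erase (A.max' hne) \ B).card = n - B.card := by
        rw [Finset.card_sdiff_of_subset hB', hc]
      simp only
      rw [ih B.card (by omega) B s rfl, ih (n - B.card) (by omega) _ _ h2]
    rw [Finset.sum_congr rfl this]
    have hsp := Finset.sum_powerset_apply_card (x := A.erase (A.max' hne)) (fun j => if (S (s + j) ↔ (0 < j ∧ j < n)) then
          ((j.factorial : ℝ) * qq S j s) * (((n-j).factorial : ℝ) * qq S (n-j) (s + j + 1)) else 0)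
    refine hsp.trans ?_
    rw [hc, qq, Finset.sum_range]
    rw [← mul_assoc, Finset.mul_sum]
    refine Finset.sum_congr rfl fun j _ => ?_
    split_ifs
    · have hj : (j : ℕ) ≤ n := by omega
      have hcf : ((n.choose j : ℕ) : ℝ) * (j : ℕ).factorial * (n - j).factorial = n.factorial := by
        exact_mod_cast Nat.choose_mul_factorial_mul_factorial hj
      rw [nsmul_eq_mul, Nat.factorial_succ]
      push_cast
      have : (n : ℝ) + 1 ≠ 0 := by positivity
      rw [← hcf]
      field_simp
    · simp

end

lemma qq_nonneg (S : ℕ → Prop) (n s : ℕ) : 0 ≤ qq S n s := by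
  have h := TT_card S n (Finset.range n) s (by simp)
  have h2 : (0 : ℝ) < n.factorial := by positivity
  have h3 : (0 : ℝ) ≤ (n.factorial : ℝ) * qq S n s := by rw [← h]; positivity
  exact nonneg_of_mul_nonneg_right h3 h2

lemma qq_zero_of (S : ℕ → Prop) (n s i : ℕ) (hi : i < n) (hS : S (s + i)) (h : i = 0 ∨ i + 1 = n) :
    qq S n s = 0 := by
  have h1 := TT_card S n (Finset.range n) s (by simp)
  have h2 : (n.factorial : ℝ) ≠ 0 := by positivity
  have : TT S (Finset.range n) s = ∅ := by
    rw [Finset.eq_empty_iff_forall_notMem]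
    intro l hl
    rw [mem_TT] at hl
    have hlen : l.length = n := by
      have := congrArg Multiset.card hl.1
      simpa using this.symm
    obtain ⟨a, b, c, h0, ha, hb, hc, _⟩ := (hl.2 i (by simpa using hi)).2 hS
    rcases h with h | h
    · omega
    · have := (List.getElem?_eq_some_iff.1 hc).1
      omega
  rw [this] at h1
  rw [Finset.card_empty, Nat.cast_zero, eq_comm, mul_eq_zero] at h1
  tauto

lemma PKL_ofFn {n : ℕ} (σ : Equiv.Perm (Fin n)) (i : ℕ) :
    PKL (List.ofFn σ) i ↔ IsPeak σ (i + 1) := by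
  unfold PKL IsPeak
  constructor
  · rintro ⟨a, b, c, h0, ha, hb, hc, hab, hcb⟩
    rw [List.getElem?_ofFn] at ha hb hc
    split_ifs at ha hb hc
    simp only [Option.some.injEq] at ha hb hc
    subst ha hb hc
    exact ⟨by omega, by omega, hab, hcb⟩
  · rintro ⟨h2, h3, h4, h5⟩
    refine ⟨_, _, _, by omega, ?_, ?_, ?_, h4, h5⟩ <;> rw [List.getElem?_ofFn]
    · rw [dif_pos (by omega)]; rfl
    · rw [dif_pos (by omega)]; rfl
    · rw [dif_pos (by omega)]

open Classical in
theorem numPeakSet_eq_s3 (n : ℕ) (T : ℕ → Prop) :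
    (numPeakSet n ((Finset.Icc 1 n).filter (fun x => T (x - 1))) : ℝ) = n.factorial * qq T n 0 := by
  rw [← TT_card T n (Finset.univ : Finset (Fin n)) 0 (by simp)]
  congr 1
  unfold numPeakSet
  rw [Nat.subtype_card (Finset.univ.filter
    (fun σ : Equiv.Perm (Fin n) => peakSet σ = ((Finset.Icc 1 n).filter (fun x => T (x - 1))))) (by simp)]
  have hiff : ∀ σ : Equiv.Perm (Fin n), peakSet σ = ((Finset.Icc 1 n).filter (fun x => T (x - 1))) ↔
      ∀ i < n, (PKL (List.ofFn σ) i ↔ T i) := by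
    intro σ
    rw [Finset.ext_iff]
    unfold peakSet
    simp only [Finset.mem_filter, Finset.mem_range, Finset.mem_Icc]
    constructor
    · intro h i hi
      rw [PKL_ofFn]
      have := h (i+1)
      simp only [Nat.add_sub_cancel] at this
      constructor
      · intro hp
        exact (this.1 ⟨hp.2.1, hp⟩).2
      · intro ht
        exact (this.2 ⟨by omega, ht⟩).2
    · intro h x
      rcases x with _ | i
      · constructor
        · rintro ⟨_, h2, _⟩
          omega
        · rintro ⟨h2, _⟩
          omega
      · constructor
        · rintro ⟨h1, h2⟩
          refine ⟨by omega, ?_⟩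
          rw [Nat.add_sub_cancel]
          exact (h i (by omega)).1 ((PKL_ofFn σ i).2 h2)
        · rintro ⟨h1, h2⟩
          rw [Nat.add_sub_cancel] at h2
          have := (PKL_ofFn σ i).1 ((h i (by omega)).2 h2)
          exact ⟨this.2.1, this⟩
  refine Finset.card_bij (fun σ _ => List.ofFn σ) ?_ ?_ ?_
  · intro σ hσ
    rw [Finset.mem_filter] at hσ
    rw [mem_TT]
    constructor
    · have h1 : (List.ofFn σ).Nodup := List.nodup_ofFn.2 σ.injective
      have : (Finset.univ : Finset (Fin n)) = ⟨(List.ofFn σ : Multiset (Fin n)), Multiset.coe_nodup.2 h1⟩ := by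
        ext x
        simp only [Finset.mem_univ, Finset.mem_mk, Multiset.mem_coe, List.mem_ofFn, true_iff]
        exact σ.surjective x
      rw [this]
    · simpa using (hiff σ).1 hσ.2
  · intro σ _ τ _ h
    exact Equiv.ext (fun x => congrFun (List.ofFn_injective h) x)
  · intro l hl
    rw [mem_TT] at hl
    have hlen : l.length = n := by
      have := congrArg Multiset.card hl.1
      simpa using this.symm
    have hnd : l.Nodup := by
      have := (Finset.univ : Finset (Fin n)).nodup
      rw [hl.1] at this
      exact Multiset.coe_nodup.1 this
    have hinj : Function.Injective (fun k : Fin n => l.get (k.cast hlen.symm)) :=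
      (List.nodup_iff_injective_get.1 hnd).comp (Fin.cast_injective _)
    let σ : Equiv.Perm (Fin n) := Equiv.ofBijective _ (Finite.injective_iff_bijective.1 hinj)
    have hσ : List.ofFn σ = l := by
      refine List.ext_getElem (by simp [hlen]) ?_
      intro i h1 h2
      rw [List.getElem_ofFn]
      rfl
    refine ⟨σ, ?_, hσ⟩
    rw [Finset.mem_filter]
    refine ⟨Finset.mem_univ _, (hiff σ).2 ?_⟩
    rw [hσ]
    simpa using hl.2

-- analysis
/-- window probability -/
noncomputable def QQ (S : ℕ → Prop) (s e : ℕ) : ℝ := qq S (e - s) s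

open Classical in
lemma QQ_rec (S : ℕ → Prop) (s e : ℕ) (h : s < e) :
    ((e : ℝ) - s) * QQ S s e = ∑ x ∈ Finset.Ico s e,
      if (S x ↔ (s < x ∧ x + 1 < e)) then QQ S s x * QQ S (x+1) e else 0 := by
  obtain ⟨n, rfl⟩ : ∃ n, e = s + (n + 1) := ⟨e - s - 1, by omega⟩
  rw [Finset.sum_Ico_eq_sum_range, Nat.add_sub_cancel_left, Finset.sum_range]
  unfold QQ
  rw [Nat.add_sub_cancel_left, qq]
  have : (n : ℝ) + 1 ≠ 0 := by positivity
  have e1 : (((s + (n+1) : ℕ) : ℝ) - s) = (n : ℝ) + 1 := by push_cast; ring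
  rw [e1, ← mul_assoc, mul_one_div_cancel this, one_mul]
  refine Finset.sum_congr rfl fun j _ => ?_
  have e2 : s + (j : ℕ) - s = j := by omega
  have e3 : s + (n + 1) - (s + (j : ℕ) + 1) = n - j := by omega
  rw [e2, e3]
  refine if_congr ?_ rfl rfl
  have : (0 < (j : ℕ) ∧ (j : ℕ) < n) ↔ (s < s + (j : ℕ) ∧ s + (j : ℕ) + 1 < s + (n + 1)) := by omega
  rw [this]

lemma QQ_nonneg (S : ℕ → Prop) (s e : ℕ) : 0 ≤ QQ S s e := qq_nonneg _ _ _

lemma QQ_self (S : ℕ → Prop) (s : ℕ) : QQ S s s = 1 := by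
  unfold QQ; rw [Nat.sub_self, qq]

lemma QQ_zero_left (S : ℕ → Prop) (s e : ℕ) (h : s < e) (hS : S s) : QQ S s e = 0 :=
  qq_zero_of S (e - s) s 0 (by omega) hS (Or.inl rfl)

lemma QQ_zero_right (S : ℕ → Prop) (s e : ℕ) (h : s < e) (hS : S (e-1)) : QQ S s e = 0 :=
  qq_zero_of S (e - s) s (e - s - 1) (by omega) (by rwa [show s + (e - s - 1) = e - 1 by omega])
    (Or.inr (by omega))

open Classical in
lemma QQ_rec2 (S : ℕ → Prop) (s e : ℕ) (h : s + 1 < e) (h1 : ¬ S s) (h2 : ¬ S (e-1)) :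
    ((e : ℝ) - s) * QQ S s e = QQ S (s+1) e + QQ S s (e-1) +
      ∑ x ∈ (Finset.Ico s e).filter S, QQ S s x * QQ S (x+1) e := by
  rw [QQ_rec S s e (by omega)]
  have : ∀ x ∈ Finset.Ico s e, (if (S x ↔ (s < x ∧ x + 1 < e)) then QQ S s x * QQ S (x+1) e else 0) =
     (if x = s then QQ S (s+1) e else 0) + (if x = e - 1 then QQ S s (e-1) else 0) +
     (if S x then QQ S s x * QQ S (x+1) e else 0) := by
    intro x hx
    rw [Finset.mem_Ico] at hx
    by_cases c1 : x = s
    · subst c1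
      rw [if_pos (by simp [h1]), if_pos rfl, if_neg (by omega), if_neg h1, QQ_self]
      ring
    · by_cases c2 : x = e - 1
      · subst c2
        rw [if_pos (by simp only [h2, false_iff]; omega), if_neg c1, if_pos rfl, if_neg h2,
          show e - 1 + 1 = e by omega, QQ_self]
        ring
      · have : (s < x ∧ x + 1 < e) := by omega
        simp only [this, and_self, iff_true, c1, c2, if_false, zero_add]
  rw [Finset.sum_congr rfl this, Finset.sum_add_distrib, Finset.sum_add_distrib,
    Finset.sum_ite_eq', Finset.sum_ite_eq', if_pos (by simp; omega), if_pos (by simp; omega),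
    ← Finset.sum_filter]

/-- probability of no peaks -/
noncomputable def GG : ℕ → ℝ
  | 0 => 1
  | 1 => 1
  | n+2 => 2 / ((n : ℝ) + 2) * GG (n+1)

lemma GG_pos : ∀ n, 0 < GG n
  | 0 => by simp [GG]
  | 1 => by simp [GG]
  | n+2 => by rw [GG]; have := GG_pos (n+1); positivity

lemma QQ_no (S : ℕ → Prop) : ∀ n s : ℕ, (∀ x, s ≤ x → x < s + n → ¬ S x) → QQ S s (s + n) = GG n
  | 0, s, _ => by rw [add_zero, QQ_self, GG]
  | 1, s, h => by
    classical
    have := QQ_rec S s (s+1) (by omega)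
    have hs := h s (by omega) (by omega)
    simp [QQ_self, hs] at this
    rw [this, GG]
  | n+2, s, h => by
    classical
    have := QQ_rec2 S s (s+(n+2)) (by omega) (h s (by omega) (by omega)) (h _ (by omega) (by omega))
    have hf : (Finset.Ico s (s+(n+2))).filter S = ∅ := by
      rw [Finset.filter_eq_empty_iff]
      intro x hx
      rw [Finset.mem_Ico] at hx
      exact h x hx.1 hx.2
    have i1 := QQ_no S (n+1) (s+1) (fun x h1 h2 => h x (by omega) (by omega))
    have i2 := QQ_no S (n+1) s (fun x h1 h2 => h x (by omega) (by omega))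
    rw [hf, Finset.sum_empty, show s + (n+2) - 1 = s + (n+1) by omega, i2,
      show s + (n+2) = s + 1 + (n+1) by omega, i1] at this
    rw [show s + (n+2) = s + 1 + (n+1) by omega, GG]
    push_cast at this
    have hp : (n : ℝ) + 2 ≠ 0 := by positivity
    field_simp
    linarith

/-- end factor -/
noncomputable def eh : ℕ → ℝ
  | 0 => 0
  | 1 => 1
  | 2 => 1
  | 3 => 603/1000
  | n+4 => eh (n+3) / 2

/-- interior factor -/
noncomputable def wh : ℕ → ℝ
  | 0 => 41/100
  | 1 => 41/100
  | 2 => 1/3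
  | 3 => 175/1000
  | n+4 => wh (n+3) / 2

lemma eh_nonneg : ∀ n, 0 ≤ eh n
  | 0 => by simp [eh]
  | 1 => by simp [eh]
  | 2 => by simp [eh]
  | 3 => by norm_num [eh]
  | n+4 => by rw [eh]; have := eh_nonneg (n+3); positivity

lemma eh_pos : ∀ n, 0 < n → 0 < eh n
  | 0, h => by omega
  | 1, _ => by simp [eh]
  | 2, _ => by simp [eh]
  | 3, _ => by norm_num [eh]
  | n+4, _ => by rw [eh]; have := eh_pos (n+3) (by omega); positivity

lemma wh_pos : ∀ n, 0 < wh n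
  | 0 => by norm_num [wh]
  | 1 => by norm_num [wh]
  | 2 => by norm_num [wh]
  | 3 => by norm_num [wh]
  | n+4 => by rw [wh]; have := wh_pos (n+3); positivity

lemma eh_wh (n : ℕ) : eh (n+3) = 603/175 * wh (n+3) := by
  induction n with
  | zero => norm_num [eh, wh]
  | succ n ih => 
    rw [show n + 1 + 3 = n + 4 by omega, eh, wh, ih]; ring

/-- interior constraint -/
lemma int_con (d : ℕ) : 3/2 * (1/3 * eh d / wh d)^2 ≤ ((d : ℝ) + 1)/2 := by
  rcases d with _ | _ | _ | d
  · norm_num [eh, wh]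
  · norm_num [eh, wh]
  · norm_num [eh, wh]
  · rw [eh_wh]
    have := wh_pos (d+3)
    have h : 1/3 * (603/175 * wh (d+3)) / wh (d+3) = 201/175 := by field_simp; norm_num
    rw [show d + 1 + 1 + 1 = d + 3 by omega, h]
    push_cast
    have : (0 : ℝ) ≤ d := by positivity
    nlinarith

lemma GG_eh (n : ℕ) : GG (n+3) ≤ (2/3)/(603/1000) * eh (n+3) := by
  induction n with
  | zero => norm_num [eh, GG]
  | succ n ih =>
    rw [show n + 1 + 3 = n + 4 by omega, eh, show n + 4 = (n+2) + 2 by omega, GG,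
      show n + 2 + 1 = n + 3 by omega]
    have h1 : 2 / (((n+2 : ℕ) : ℝ) + 2) ≤ 1/2 := by
      rw [div_le_div_iff₀ (by positivity) (by norm_num)]
      push_cast
      have : (0 : ℝ) ≤ n := by positivity
      linarith
    have h2 := GG_pos (n+3)
    nlinarith

lemma end_con (d : ℕ) (hd : 0 < d) :
    eh (d-1) / eh d + 3/2 * (GG d / eh d)^2 ≤ (d : ℝ) + 1/2 := by
  rcases d with _ | _ | _ | _ | d
  · omega
  · norm_num [eh, GG]
  · norm_num [eh, GG]
  · norm_num [eh, GG]
  · have h := GG_eh (d+1)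
    have hp := eh_pos (d+4) (by omega)
    have hg := GG_pos (d+4)
    rw [show d + 1 + 1 + 1 + 1 = d + 4 by omega, show d + 4 - 1 = d + 3 by omega]
    rw [show d + 1 + 3 = d + 4 by omega] at h
    have e1 : eh (d+3) / eh (d+4) = 2 := by
      have : eh (d+4) = eh (d+3) / 2 := by rw [eh]
      rw [this] at hp ⊢
      have h3 : eh (d+3) ≠ 0 := by linarith
      field_simp
    have e2 : GG (d+4) / eh (d+4) ≤ (2/3)/(603/1000) := by
      rw [div_le_iff₀ hp]; exact h
    have e3 : 0 ≤ GG (d+4) / eh (d+4) := by positivity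
    have e4 : (GG (d+4) / eh (d+4))^2 ≤ ((2/3)/(603/1000))^2 := by gcongr
    rw [e1]
    push_cast
    have : (0 : ℝ) ≤ d := by positivity
    norm_num at e4
    linarith

/-- the peak pattern with peaks `p 0 < p 1 < …` -/
def SP (p : ℕ → ℕ) : ℕ → Prop := fun x => ∃ m, p m = x

/-- the peaks in the window `[s,e)` are exactly `p i, …, p j`. -/
def Win (p : ℕ → ℕ) (s e i j : ℕ) : Prop := ∀ m, (s ≤ p m ∧ p m < e) ↔ (i ≤ m ∧ m ≤ j)

lemma QQ_rec3 (p : ℕ → ℕ) (hp : StrictMono p) (s e i j : ℕ) (hij : i ≤ j) (hW : Win p s e i j)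
    (hs : s < p i) (he : p j + 1 < e) :
    ((e : ℝ) - s) * QQ (SP p) s e = QQ (SP p) (s+1) e + QQ (SP p) s (e-1) +
      ∑ m ∈ Finset.Icc i j, QQ (SP p) s (p m) * QQ (SP p) (p m + 1) e := by
  classical
  have hpij : p i ≤ p j := hp.monotone hij
  rw [QQ_rec2 (SP p) s e (by omega)]
  · congr 1
    have : (Finset.Ico s e).filter (SP p) = (Finset.Icc i j).image p := by
      ext x
      simp only [Finset.mem_filter, Finset.mem_Ico, Finset.mem_image, Finset.mem_Icc, SP]
      constructor
      · rintro ⟨h, m, rfl⟩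
        exact ⟨m, (hW m).1 h, rfl⟩
      · rintro ⟨m, h, rfl⟩
        exact ⟨(hW m).2 h, m, rfl⟩
    rw [this, Finset.sum_image (fun a _ b _ h => hp.injective h)]
  · rintro ⟨m, hm⟩
    have h1 := ((hW m).1 (by omega)).1
    have := hp.monotone h1
    omega
  · rintro ⟨m, hm⟩
    have h1 := ((hW m).1 (by omega)).2
    have := hp.monotone h1
    omega

lemma Win_left {p : ℕ → ℕ} (hp : StrictMono p) {s e i j : ℕ} (hW : Win p s e i j) {m : ℕ}
    (h1 : i < m) (h2 : m ≤ j) : Win p s (p m) i (m-1) := by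
  intro k
  have hk := hW k
  have hm := (hW m).2 ⟨h1.le, h2⟩
  have := hp.lt_iff_lt (a := k) (b := m)
  omega

lemma Win_right {p : ℕ → ℕ} (hp : StrictMono p) {s e i j : ℕ} (hW : Win p s e i j) {m : ℕ}
    (h1 : i ≤ m) (h2 : m < j) : Win p (p m + 1) e (m+1) j := by
  intro k
  have hk := hW k
  have hm := (hW m).2 ⟨h1, h2.le⟩
  have := hp.lt_iff_lt (a := m) (b := k)
  omega

lemma Win_s {p : ℕ → ℕ} (hp : StrictMono p) {s e i j : ℕ} (hW : Win p s e i j)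
    (h : s < p i) : Win p (s+1) e i j := by
  intro k
  have hk := hW k
  have := hp.le_iff_le (a := i) (b := k)
  omega

lemma Win_e {p : ℕ → ℕ} (hp : StrictMono p) {s e i j : ℕ} (hW : Win p s e i j)
    (h : p j + 1 < e) : Win p s (e-1) i j := by
  intro k
  have hk := hW k
  have := hp.le_iff_le (a := k) (b := j)
  omega

lemma QQ_first {p : ℕ → ℕ} (hp : StrictMono p) {s e i j : ℕ} (hij : i ≤ j) (hW : Win p s e i j) :
    QQ (SP p) s (p i) = GG (p i - s) := by
  have h1 := (hW i).2 ⟨le_refl _, hij⟩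
  have := QQ_no (SP p) (p i - s) s ?_
  · rwa [show s + (p i - s) = p i by omega] at this
  · rintro x hx1 hx2 ⟨m, rfl⟩
    have h3 := (hW m).1 (by omega)
    have := hp.monotone h3.1
    omega

lemma QQ_last {p : ℕ → ℕ} (hp : StrictMono p) {s e i j : ℕ} (hij : i ≤ j) (hW : Win p s e i j) :
    QQ (SP p) (p j + 1) e = GG (e - 1 - p j) := by
  have h1 := (hW j).2 ⟨hij, le_refl _⟩
  have := QQ_no (SP p) (e - 1 - p j) (p j + 1) ?_
  · rwa [show p j + 1 + (e - 1 - p j) = e by omega] at this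
  · rintro x hx1 hx2 ⟨m, rfl⟩
    have h3 := (hW m).1 (by omega)
    have := hp.monotone h3.2
    omega

/-- product of interior factors -/
noncomputable def WP (p : ℕ → ℕ) (i j : ℕ) : ℝ := ∏ m ∈ Finset.Ico i j, wh (p (m+1) - p m - 1)

lemma WP_pos (p : ℕ → ℕ) (i j : ℕ) : 0 < WP p i j := Finset.prod_pos fun _ _ => wh_pos _

lemma WP_mul (p : ℕ → ℕ) {i m j : ℕ} (h1 : i ≤ m) (h2 : m ≤ j) : WP p i m * WP p m j = WP p i j :=
  Finset.prod_Ico_consecutive _ h1 h2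

lemma WP_one (p : ℕ → ℕ) (m : ℕ) : WP p m (m+1) = wh (p (m+1) - p m - 1) := by
  simp [WP]

theorem QQ_bound (p : ℕ → ℕ) (hp : StrictMono p) : ∀ (N s e i j : ℕ), e - s = N → i ≤ j →
    Win p s e i j → QQ (SP p) s e ≤ 1/3 * eh (p i - s) * eh (e - 1 - p j) * WP p i j := by
  intro N
  induction N using Nat.strong_induction_on with
  | _ N ih =>
  intro s e i j hN hij hW
  have hi := (hW i).2 ⟨le_refl _, hij⟩
  have hj := (hW j).2 ⟨hij, le_refl _⟩
  have hpij : p i ≤ p j := hp.monotone hij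
  rcases hi.1.eq_or_lt with h | hs
  · rw [QQ_zero_left _ _ _ (by omega) ⟨i, h.symm⟩, h]
    simp [eh]
  rcases (Nat.succ_le_of_lt hj.2).eq_or_lt with h | he
  · rw [QQ_zero_right _ _ _ (by omega) ⟨j, by omega⟩, show e - 1 - p j = 0 by omega]
    simp [eh]
  have he' : p j + 1 < e := he
  set R := 1/3 * eh (p i - s) * eh (e - 1 - p j) * WP p i j with hR
  have p0 := eh_pos (p i - s) (by omega)
  have p1 := eh_pos (e - 1 - p j) (by omega)
  have pW := WP_pos p i j
  have hRpos : 0 < R := by positivity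
  have hrec := QQ_rec3 p hp s e i j hij hW hs he'
  set d0 := p i - s with hd0
  set d1 := e - 1 - p j with hd1
  have t0 : QQ (SP p) (s+1) e ≤ eh (d0 - 1) / eh d0 * R := by
    have := ih (e - (s+1)) (by omega) (s+1) e i j rfl hij (Win_s hp hW hs)
    rw [show p i - (s+1) = d0 - 1 by omega] at this
    refine this.trans (le_of_eq ?_)
    rw [hR]
    try simp only [← hd0, ← hd1]
    field_simp
  have t1 : QQ (SP p) s (e-1) ≤ eh (d1 - 1) / eh d1 * R := by
    have := ih (e - 1 - s) (by omega) s (e-1) i j rfl hij (Win_e hp hW he')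
    rw [show e - 1 - 1 - p j = d1 - 1 by omega] at this
    refine this.trans (le_of_eq ?_)
    rw [hR]
    try simp only [← hd0, ← hd1]
    field_simp
  let X : ℕ → ℝ := fun m => if m = i then GG d0 / eh d0 else
    1/3 * eh (p m - p (m-1) - 1) / wh (p m - p (m-1) - 1)
  let Y : ℕ → ℝ := fun m => if m = j then GG d1 / eh d1 else
    1/3 * eh (p (m+1) - p m - 1) / wh (p (m+1) - p m - 1)
  have tX : ∀ m ∈ Finset.Icc i j, QQ (SP p) s (p m) ≤ X m * eh d0 * WP p i m := by
    intro m hm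
    rw [Finset.mem_Icc] at hm
    rcases hm.1.eq_or_lt with h | h
    · subst h
      simp only [X, if_true, WP, Finset.Ico_self, Finset.prod_empty, mul_one]
      rw [QQ_first hp hij hW, div_mul_cancel₀ _ p0.ne']
    · have hpm : p m < e := ((hW m).2 hm).2
      have := ih (p m - s) (by omega) s (p m) i (m-1) rfl (by omega) (Win_left hp hW h hm.2)
      refine this.trans (le_of_eq ?_)
      simp only [X, if_neg h.ne']
      rw [← WP_mul p (i := i) (m := m - 1) (j := m) (by omega) (by omega)]
      have h1 := WP_one p (m-1)
      rw [show m - 1 + 1 = m by omega] at h1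
      rw [h1, show p m - p (m-1) - 1 = p m - 1 - p (m-1) by omega]
      have := wh_pos (p m - 1 - p (m-1))
      try simp only [← hd0, ← hd1]
      field_simp
  have tY : ∀ m ∈ Finset.Icc i j, QQ (SP p) (p m + 1) e ≤ Y m * eh d1 * WP p m j := by
    intro m hm
    rw [Finset.mem_Icc] at hm
    rcases hm.2.eq_or_lt with h | h
    · subst h
      simp only [Y, if_true, WP, Finset.Ico_self, Finset.prod_empty, mul_one]
      rw [QQ_last hp hij hW, div_mul_cancel₀ _ p1.ne']
    · have hpm : s ≤ p m := ((hW m).2 hm).1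
      have hpm : p m < e := ((hW m).2 hm).2
      have := ih (e - (p m + 1)) (by omega) (p m + 1) e (m+1) j rfl (by omega) (Win_right hp hW hm.1 h)
      refine this.trans (le_of_eq ?_)
      simp only [Y, if_neg h.ne]
      rw [← WP_mul p (i := m) (m := m + 1) (j := j) (by omega) (by omega), WP_one,
        show p (m+1) - p m - 1 = p (m+1) - (p m + 1) by omega]
      have := wh_pos (p (m+1) - (p m + 1))
      try simp only [← hd0, ← hd1]
      field_simp
  have tS : ∑ m ∈ Finset.Icc i j, QQ (SP p) s (p m) * QQ (SP p) (p m + 1) e ≤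
      (∑ m ∈ Finset.Icc i j, 3/2 * X m ^ 2 + ∑ m ∈ Finset.Icc i j, 3/2 * Y m ^ 2) * R := by
    rw [← Finset.sum_add_distrib, Finset.sum_mul]
    refine Finset.sum_le_sum fun m hm => ?_
    have hx := tX m hm
    have hy := tY m hm
    have hm' := Finset.mem_Icc.1 hm
    calc _ ≤ (X m * eh d0 * WP p i m) * (Y m * eh d1 * WP p m j) :=
          mul_le_mul hx hy (QQ_nonneg _ _ _) ((QQ_nonneg _ _ _).trans hx)
      _ = 3 * (X m * Y m) * R := by
          rw [hR, ← WP_mul p hm'.1 hm'.2]; ring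
      _ ≤ _ := by
          refine mul_le_mul_of_nonneg_right ?_ hRpos.le
          nlinarith [sq_nonneg (X m - Y m)]
  have sX : ∀ k, i ≤ k → ∑ m ∈ Finset.Icc i k, 3/2 * X m ^ 2 ≤
      3/2 * (GG d0 / eh d0)^2 + ((p k : ℝ) - p i)/2 := by
    intro k hk
    induction k, hk using Nat.le_induction with
    | base => simp [X]
    | succ k hk ihk =>
      rw [Finset.sum_Icc_succ_top (by omega)]
      have hlt : p k < p (k+1) := hp (by omega)
      have h1 : 3/2 * X (k+1) ^ 2 ≤ ((p (k+1) : ℝ) - p k)/2 := by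
        simp only [X, if_neg (show k + 1 ≠ i by omega), Nat.add_sub_cancel]
        refine (int_con _).trans (le_of_eq ?_)
        rw [show p (k+1) - p k - 1 = p (k+1) - (p k + 1) by omega, Nat.cast_sub (by omega)]
        push_cast; ring
      linarith
  have sY : ∀ k, i ≤ k → k ≤ j → ∑ m ∈ Finset.Ico i k, 3/2 * Y m ^ 2 ≤ ((p k : ℝ) - p i)/2 := by
    intro k hk
    induction k, hk using Nat.le_induction with
    | base => simp
    | succ k hk ihk =>
      intro hkj
      rw [Finset.sum_Ico_succ_top (by omega)]
      have hlt : p k < p (k+1) := hp (by omega)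
      have h1 : 3/2 * Y k ^ 2 ≤ ((p (k+1) : ℝ) - p k)/2 := by
        simp only [Y, if_neg (show k ≠ j by omega)]
        refine (int_con _).trans (le_of_eq ?_)
        rw [show p (k+1) - p k - 1 = p (k+1) - (p k + 1) by omega, Nat.cast_sub (by omega)]
        push_cast; ring
      have := ihk (by omega)
      linarith
  have sX' := sX j hij
  have sY' : ∑ m ∈ Finset.Icc i j, 3/2 * Y m ^ 2 ≤ 3/2 * (GG d1 / eh d1)^2 + ((p j : ℝ) - p i)/2 := by
    rw [← Finset.sum_Ico_add_eq_sum_Icc hij]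
    have := sY j hij le_rfl
    have h2 : Y j = GG d1 / eh d1 := by simp [Y]
    rw [h2]
    linarith
  have c0 := end_con d0 (by omega)
  have c1 := end_con d1 (by omega)
  have hd0' : (d0 : ℝ) = (p i : ℝ) - s := by rw [hd0, Nat.cast_sub hs.le]
  have hd1' : (d1 : ℝ) = (e : ℝ) - 1 - p j := by
    rw [hd1, show e - 1 - p j = e - (1 + p j) by omega, Nat.cast_sub (by omega)]
    push_cast; ring
  have hpos : (0 : ℝ) < (e : ℝ) - s := by
    have : (s : ℝ) < e := by exact_mod_cast (by omega : s < e)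
    linarith
  refine le_of_mul_le_mul_left ?_ hpos
  rw [hrec]
  calc _ ≤ (eh (d0 - 1) / eh d0 + eh (d1 - 1) / eh d1 +
        (∑ m ∈ Finset.Icc i j, 3/2 * X m ^ 2 + ∑ m ∈ Finset.Icc i j, 3/2 * Y m ^ 2)) * R := by
        linarith
    _ ≤ _ := by
        refine mul_le_mul_of_nonneg_right ?_ hRpos.le
        linarith

/-- exact end factor -/
noncomputable def ex : ℕ → ℝ
  | 0 => 0
  | 1 => 1
  | 2 => 1
  | _ => 3/5

lemma ex_pos (d : ℕ) (h : 0 < d) : 0 < ex d := by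
  rcases d with _ | _ | _ | d
  · omega
  · norm_num [ex]
  · norm_num [ex]
  · change (0 : ℝ) < 3/5
    norm_num

lemma ex_con (d : ℕ) (h : 0 < d) (h' : d ≤ 3) :
    ex (d-1) / ex d + 3/2 + 3 * (GG d / ex d - 1) = (d : ℝ) + 1/2 := by
  interval_cases d <;> norm_num [ex, GG]

theorem QQ_exact (p : ℕ → ℕ) (hp : StrictMono p) : ∀ (N s e i j : ℕ), e - s = N → i ≤ j →
    Win p s e i j → (∀ m, i ≤ m → m < j → p (m+1) = p m + 3) → p i - s ≤ 3 → e - 1 - p j ≤ 3 →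
    (p i - s ≤ 2 ∨ e - 1 - p j ≤ 2) →
    QQ (SP p) s e = 1/3 * ex (p i - s) * ex (e - 1 - p j) * (1/3)^(j-i) := by
  intro N
  induction N using Nat.strong_induction_on with
  | _ N ih =>
  intro s e i j hN hij hW hg hb0 hb1 hb2
  have hi := (hW i).2 ⟨le_refl _, hij⟩
  have hj := (hW j).2 ⟨hij, le_refl _⟩
  have hpij : p i ≤ p j := hp.monotone hij
  rcases hi.1.eq_or_lt with h | hs
  · rw [QQ_zero_left _ _ _ (by omega) ⟨i, h.symm⟩, h]
    simp [ex]
  rcases (Nat.succ_le_of_lt hj.2).eq_or_lt with h | he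
  · rw [QQ_zero_right _ _ _ (by omega) ⟨j, by omega⟩, show e - 1 - p j = 0 by omega]
    simp [ex]
  have he' : p j + 1 < e := he
  set R := 1/3 * ex (p i - s) * ex (e - 1 - p j) * (1/3)^(j-i) with hR
  have p0 := ex_pos (p i - s) (by omega)
  have p1 := ex_pos (e - 1 - p j) (by omega)
  have hrec := QQ_rec3 p hp s e i j hij hW hs he'
  set d0 := p i - s with hd0
  set d1 := e - 1 - p j with hd1
  have t0 : QQ (SP p) (s+1) e = ex (d0 - 1) / ex d0 * R := by
    have := ih (e - (s+1)) (by omega) (s+1) e i j rfl hij (Win_s hp hW hs) hg (by omega) (by omega) (by omega)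
    rw [show p i - (s+1) = d0 - 1 by omega] at this
    rw [this, hR]
    try simp only [← hd0, ← hd1]
    field_simp
  have t1 : QQ (SP p) s (e-1) = ex (d1 - 1) / ex d1 * R := by
    have := ih (e - 1 - s) (by omega) s (e-1) i j rfl hij (Win_e hp hW he') hg (by omega) (by omega) (by omega)
    rw [show e - 1 - 1 - p j = d1 - 1 by omega] at this
    rw [this, hR]
    try simp only [← hd0, ← hd1]
    field_simp
  have tX : ∀ m ∈ Finset.Icc i j, QQ (SP p) s (p m) =
      (1 + if m = i then GG d0 / ex d0 - 1 else 0) * ex d0 * (1/3)^(m-i) := by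
    intro m hm
    rw [Finset.mem_Icc] at hm
    rcases hm.1.eq_or_lt with h | h
    · subst h
      rw [QQ_first hp hij hW]
      simp
      try simp only [← hd0, ← hd1]
      field_simp
    · have hpm : p m < e := ((hW m).2 hm).2
      have hgm := hg (m-1) (by omega) (by omega)
      rw [show m - 1 + 1 = m by omega] at hgm
      rw [ih (p m - s) (by omega) s (p m) i (m-1) rfl (by omega) (Win_left hp hW h hm.2)
        (fun k h1 h2 => hg k h1 (by omega)) (by omega) (by omega) (by omega),
        if_neg h.ne', show p m - 1 - p (m-1) = 2 by omega, show m - i = m - 1 - i + 1 by omega, pow_succ]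
      simp only [ex]
      ring
  have tY : ∀ m ∈ Finset.Icc i j, QQ (SP p) (p m + 1) e =
      (1 + if m = j then GG d1 / ex d1 - 1 else 0) * ex d1 * (1/3)^(j-m) := by
    intro m hm
    rw [Finset.mem_Icc] at hm
    rcases hm.2.eq_or_lt with h | h
    · subst h
      rw [QQ_last hp hij hW]
      simp
      try simp only [← hd0, ← hd1]
      field_simp
    · have hpm : s ≤ p m := ((hW m).2 hm).1
      have hpm : p m < e := ((hW m).2 hm).2
      have hgm := hg m (by omega) (by omega)
      rw [ih (e - (p m + 1)) (by omega) (p m + 1) e (m+1) j rfl (by omega) (Win_right hp hW hm.1 h)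
        (fun k h1 h2 => hg k (by omega) (by omega)) (by omega) (by omega) (by omega),
        if_neg h.ne, show p (m+1) - (p m + 1) = 2 by omega, show j - m = j - (m + 1) + 1 by omega, pow_succ]
      simp only [ex]
      ring
  have hXY : (GG d0 / ex d0 - 1) * (GG d1 / ex d1 - 1) = 0 := by
    have hh : ∀ d, 0 < d → d ≤ 2 → GG d / ex d - 1 = 0 := by
      intro d h1 h2
      interval_cases d <;> norm_num [GG, ex]
    rcases hb2 with h | h
    · rw [hh d0 (by omega) h, zero_mul]
    · rw [hh d1 (by omega) h, mul_zero]
  have tS : ∑ m ∈ Finset.Icc i j, QQ (SP p) s (p m) * QQ (SP p) (p m + 1) e =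
      (((j : ℝ) - i + 1) + (GG d0 / ex d0 - 1) + (GG d1 / ex d1 - 1)) * (3 * R) := by
    have : ∀ m ∈ Finset.Icc i j, QQ (SP p) s (p m) * QQ (SP p) (p m + 1) e =
       (1 + (if m = i then GG d0 / ex d0 - 1 else 0) + (if m = j then GG d1 / ex d1 - 1 else 0)) * (3 * R) := by
      intro m hm
      rw [tX m hm, tY m hm, hR]
      have hm' := Finset.mem_Icc.1 hm
      have : ((1:ℝ)/3)^(j-i) = (1/3)^(m-i) * (1/3)^(j-m) := by
        rw [← pow_add]; congr 1; omega
      rw [this]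
      have h3 : (1 + (if m = i then GG d0 / ex d0 - 1 else 0)) * (1 + (if m = j then GG d1 / ex d1 - 1 else 0))
          = (1 + (if m = i then GG d0 / ex d0 - 1 else 0) + (if m = j then GG d1 / ex d1 - 1 else 0)) := by
        split_ifs <;> first | linear_combination hXY | ring
      rw [← h3]
      ring
    rw [Finset.sum_congr rfl this, ← Finset.sum_mul, Finset.sum_add_distrib, Finset.sum_add_distrib,
      Finset.sum_ite_eq', Finset.sum_ite_eq', if_pos (by simp [hij]), if_pos (by simp [hij])]
    simp only [Finset.sum_const, Nat.card_Icc, nsmul_eq_mul, mul_one]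
    rw [Nat.cast_sub (by omega)]
    push_cast
    ring
  have hlin : ∀ k, i ≤ k → k ≤ j → p k = p i + 3 * (k - i) := by
    intro k hk
    induction k, hk using Nat.le_induction with
    | base => simp
    | succ k hk ihk =>
      intro h
      have h1 := ihk (by omega)
      have h2 := hg k hk (by omega)
      omega
  have hl := hlin j hij le_rfl
  have hl' : (p j : ℝ) = p i + 3 * ((j : ℝ) - i) := by
    rw [hl, Nat.cast_add, Nat.cast_mul, Nat.cast_sub hij]; norm_num
  have c0 := ex_con d0 (by omega) (by omega)
  have c1 := ex_con d1 (by omega) (by omega)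
  have hd0' : (d0 : ℝ) = (p i : ℝ) - s := by rw [hd0, Nat.cast_sub hs.le]
  have hd1' : (d1 : ℝ) = (e : ℝ) - 1 - p j := by
    rw [hd1, show e - 1 - p j = e - (1 + p j) by omega, Nat.cast_sub (by omega)]
    push_cast; ring
  have hpos : (0 : ℝ) < (e : ℝ) - s := by
    have : (s : ℝ) < e := by exact_mod_cast (by omega : s < e)
    linarith
  refine mul_left_cancel₀ hpos.ne' ?_
  rw [hrec, t0, t1, tS]
  linear_combination R * (c0 + c1 + hd0' + hd1' - hl')

lemma wh_cube_aux (n : ℕ) : wh (n+3) ^ 3 * 3 ^ (n+4) ≤ 63/100 := by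
  induction n with
  | zero => norm_num [wh]
  | succ n ih =>
    rw [show n + 1 + 3 = n + 4 by omega, wh, show n + 1 + 4 = (n + 4) + 1 by omega, pow_succ (3:ℝ)]
    have := wh_pos (n+3)
    have h2 : (0:ℝ) ≤ wh (n+3) ^ 3 * 3 ^ (n+4) := by positivity
    have h3 : (wh (n+3) / 2) ^ 3 * (3 ^ (n+4) * 3) = 3/8 * (wh (n+3) ^ 3 * 3 ^ (n+4)) := by ring
    rw [h3]
    linarith

lemma wh_cube (d : ℕ) (h : d ≠ 2) : wh d ^ 3 * 3 ^ (d+1) ≤ 63/100 := by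
  rcases d with _ | _ | _ | d
  · norm_num [wh]
  · norm_num [wh]
  · omega
  · exact wh_cube_aux d

lemma wh_cube' (d : ℕ) : wh d ^ 3 * 3 ^ (d+1) ≤ 1 := by
  by_cases h : d = 2
  · subst h; norm_num [wh]
  · linarith [wh_cube d h]

lemma eh_cube_aux (n : ℕ) : eh (n+4) ^ 3 * 3 ^ (n+4) ≤ 3 := by
  induction n with
  | zero => norm_num [eh]
  | succ n ih =>
    have e1 : eh (n+1+4) = eh (n+4) / 2 := by
      rw [show n + 1 + 4 = (n + 1) + 4 by omega, eh]
    rw [e1, show n + 1 + 4 = (n + 4) + 1 by omega, pow_succ (3:ℝ)]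
    have := eh_pos (n+4) (by omega)
    have h2 : (0:ℝ) ≤ eh (n+4) ^ 3 * 3 ^ (n+4) := by positivity
    have h3 : (eh (n+4) / 2) ^ 3 * (3 ^ (n+4) * 3) = 3/8 * (eh (n+4) ^ 3 * 3 ^ (n+4)) := by ring
    rw [h3]
    linarith

lemma eh_cube3 (d : ℕ) (h : d ≠ 2) (h' : d ≠ 3) : eh d ^ 3 * 3 ^ d ≤ 3 := by
  rcases d with _ | _ | _ | _ | d
  · norm_num [eh]
  · norm_num [eh]
  · omega
  · omega
  · exact eh_cube_aux d

lemma eh_cube2 (d : ℕ) (h : d ≠ 2) : eh d ^ 3 * 3 ^ d ≤ 5921/1000 := by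
  by_cases h' : d = 3
  · subst h'; norm_num [eh]
  · linarith [eh_cube3 d h h']

lemma eh_cube1 (d : ℕ) : eh d ^ 3 * 3 ^ d ≤ 9 := by
  by_cases h' : d = 2
  · subst h'; norm_num [eh]
  · linarith [eh_cube2 d h']

lemma WP_cube (p : ℕ → ℕ) (hp : StrictMono p) (i : ℕ) : ∀ j, i ≤ j →
    WP p i j ^ 3 * 3 ^ (p j - p i) ≤ 1 := by
  intro j hj
  induction j, hj using Nat.le_induction with
  | base => simp [WP]
  | succ j hj ih =>
    rw [← WP_mul p hj (Nat.le_succ j), WP_one]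
    have h1 : p j < p (j+1) := hp (by omega)
    have h2 : p i ≤ p j := hp.monotone hj
    rw [show p (j+1) - p i = (p j - p i) + ((p (j+1) - p j - 1) + 1) by omega, pow_add]
    have := wh_cube' (p (j+1) - p j - 1)
    have w1 := wh_pos (p (j+1) - p j - 1)
    have w2 := WP_pos p i j
    calc _ = (WP p i j ^ 3 * 3 ^ (p j - p i)) *
        (wh (p (j+1) - p j - 1) ^ 3 * 3 ^ (p (j+1) - p j - 1 + 1)) := by ring
      _ ≤ 1 * 1 := mul_le_mul ih this (by positivity) (by norm_num)
      _ = 1 := by norm_num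

lemma WP_cube' (p : ℕ → ℕ) (hp : StrictMono p) (i j m : ℕ) (h1 : i ≤ m) (h2 : m < j)
    (h : p (m+1) ≠ p m + 3) :
    WP p i j ^ 3 * 3 ^ (p j - p i) ≤ 63/100 := by
  rw [← WP_mul p h1 h2.le, ← WP_mul p (Nat.le_succ m) h2, WP_one]
  have k1 : p m < p (m+1) := hp (by omega)
  have k2 : p i ≤ p m := hp.monotone h1
  have k3 : p (m+1) ≤ p j := hp.monotone h2
  rw [show p j - p i = (p m - p i) + ((p (m+1) - p m - 1) + 1) + (p j - p (m+1)) by omega,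
    pow_add, pow_add]
  have a1 := WP_cube p hp i m h1
  have a2 := wh_cube (p (m+1) - p m - 1) (by omega)
  have a3 := WP_cube p hp (m+1) j h2
  have w1 := wh_pos (p (m+1) - p m - 1)
  have w2 := WP_pos p i m
  have w3 := WP_pos p (m+1) j
  calc _ = (WP p i m ^ 3 * 3 ^ (p m - p i)) *
        (wh (p (m+1) - p m - 1) ^ 3 * 3 ^ (p (m+1) - p m - 1 + 1)) *
        (WP p (m+1) j ^ 3 * 3 ^ (p j - p (m+1))) := by
          simp only [Nat.succ_eq_add_one]; ring
    _ ≤ 1 * (63/100) * 1 := by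
        refine mul_le_mul (mul_le_mul a1 a2 (by positivity) (by norm_num)) a3 (by positivity) (by norm_num)
    _ = 63/100 := by norm_num

theorem QQ_upper (p : ℕ → ℕ) (hp : StrictMono p) (l i j : ℕ) (hij : i ≤ j) (hl : 2 ≤ l)
    (hW : Win p 0 (3*l) i j) : QQ (SP p) 0 (3*l) ≤ 9/5 * (1/3)^l := by
  have hj := (hW j).2 ⟨hij, le_refl _⟩
  have hpij : p i ≤ p j := hp.monotone hij
  have hlin : (∀ m, i ≤ m → m < j → p (m+1) = p m + 3) → p j = p i + 3 * (j - i) := by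
    intro hg
    have : ∀ k, i ≤ k → k ≤ j → p k = p i + 3 * (k - i) := by
      intro k hk
      induction k, hk using Nat.le_induction with
      | base => simp
      | succ k hk ihk =>
        intro h
        have h1 := ihk (by omega)
        have h2 := hg k hk (by omega)
        omega
    exact this j hij le_rfl
  by_cases hE : (∀ m, i ≤ m → m < j → p (m+1) = p m + 3) ∧
      ((p i = 2 ∧ 3*l - 1 - p j = 3) ∨ (p i = 3 ∧ 3*l - 1 - p j = 2))
  · obtain ⟨hg, hE⟩ := hE
    have h1 := hlin hg
    rw [QQ_exact p hp (3*l - 0) 0 (3*l) i j rfl hij hW hg (by omega) (by omega) (by omega)]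
    have hl2 : l = (j - i) + 2 := by omega
    have hpow : (1/3:ℝ)^l = (1/3)^((j-i)+2) := congrArg _ hl2
    rw [hpow, Nat.sub_zero]
    rcases hE with ⟨ha, hb⟩ | ⟨ha, hb⟩
    · rw [ha, hb, pow_add]; norm_num [ex]; apply le_of_eq; ring
    · rw [ha, hb, pow_add]; norm_num [ex]; apply le_of_eq; ring
  · have hb := QQ_bound p hp (3*l - 0) 0 (3*l) i j rfl hij hW
    rw [Nat.sub_zero] at hb
    refine hb.trans ?_
    set d0 := p i with hd0
    set d1 := 3*l - 1 - p j with hd1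
    have e0 := eh_nonneg d0
    have e1 := eh_nonneg d1
    have eW := WP_pos p i j
    rw [← pow_le_pow_iff_left₀ (n := 3) (by positivity) (by positivity) (by norm_num)]
    have h3 : (0:ℝ) < 3 ^ (3*l) := by positivity
    refine le_of_mul_le_mul_right ?_ h3
    have hr : (9/5 * (1/3:ℝ)^l)^3 * 3^(3*l) = 729/125 := by
      have : ((1/3:ℝ)^l)^3 * 3^(3*l) = 1 := by
        rw [← pow_mul, mul_comm l 3, ← mul_pow]; norm_num
      rw [mul_pow, mul_assoc, this]; norm_num
    rw [hr]
    have hL : (1/3 * eh d0 * eh d1 * WP p i j)^3 * 3^(3*l) =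
        1/9 * (eh d0 ^ 3 * 3 ^ d0) * (eh d1 ^ 3 * 3 ^ d1) * (WP p i j ^ 3 * 3 ^ (p j - p i)) := by
      rw [show 3 * l = d0 + d1 + (p j - p i) + 1 by omega, pow_add, pow_add, pow_add]
      ring
    rw [hL]
    have key : ∀ A B C : ℝ, eh d0 ^ 3 * 3 ^ d0 ≤ A → eh d1 ^ 3 * 3 ^ d1 ≤ B →
        WP p i j ^ 3 * 3 ^ (p j - p i) ≤ C → 1/9 * A * B * C ≤ 729/125 →
        1/9 * (eh d0 ^ 3 * 3 ^ d0) * (eh d1 ^ 3 * 3 ^ d1) * (WP p i j ^ 3 * 3 ^ (p j - p i)) ≤ 729/125 := by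
      intro A B C hA hB hC h
      have pA : 0 ≤ eh d0 ^ 3 * 3 ^ d0 := by positivity
      have pB : 0 ≤ eh d1 ^ 3 * 3 ^ d1 := by positivity
      have pC : 0 ≤ WP p i j ^ 3 * 3 ^ (p j - p i) := by positivity
      have pA' := pA.trans hA
      have pB' := pB.trans hB
      refine le_trans ?_ h
      gcongr
    have c1 := WP_cube p hp i j hij
    by_cases hg : ∀ m, i ≤ m → m < j → p (m+1) = p m + 3
    · have h1 := hlin hg
      have hE' : ¬ ((d0 = 2 ∧ d1 = 3) ∨ (d0 = 3 ∧ d1 = 2)) := fun h => hE ⟨hg, h⟩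
      by_cases k0 : d0 = 2
      · exact key 9 3 1 (eh_cube1 d0) (eh_cube3 d1 (by omega) (by omega)) c1 (by norm_num)
      · by_cases k1 : d1 = 2
        · exact key 3 9 1 (eh_cube3 d0 (by omega) (by omega)) (eh_cube1 d1) c1 (by norm_num)
        · exact key _ _ 1 (eh_cube2 d0 k0) (eh_cube2 d1 k1) c1 (by norm_num)
    · push Not at hg
      obtain ⟨m, m1, m2, m3⟩ := hg
      exact key 9 9 _ (eh_cube1 d0) (eh_cube1 d1) (WP_cube' p hp i j m m1 m2 m3) (by norm_num)

lemma GG_small (k : ℕ) : GG (3*(k+2)) ≤ 9/5 * (1/3)^(k+2) := by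
  induction k with
  | zero => norm_num [GG]
  | succ k ih =>
    rw [show 3 * (k+1+2) = (3*(k+2) + 1) + 2 by omega, GG, show 3*(k+2)+1+1 = 3*(k+2)+2 by omega, GG]
    rw [show 3*(k+2)+1 = (3*k + 5) + 2 by omega, GG, show 3*k+5+1 = 3*(k+2) by omega]
    have hk : (0:ℝ) ≤ k := by positivity
    have h1 : ∀ x : ℝ, 4 ≤ x → 2 / (x + 2) ≤ 1/3 := by
      intro x hx
      rw [div_le_div_iff₀ (by linarith) (by norm_num)]; linarith
    have h2 : ∀ x : ℝ, 4 ≤ x → 0 ≤ 2 / (x + 2) := by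
      intro x hx
      have : 0 < x + 2 := by linarith
      positivity
    have hg := GG_pos (3*(k+2))
    have x1 : (4:ℝ) ≤ ((3*k+5+2 : ℕ) : ℝ) := by push_cast; linarith
    have x2 : (4:ℝ) ≤ ((3*(k+2) : ℕ) : ℝ) := by push_cast; linarith
    have x3 : (4:ℝ) ≤ ((3*k+5 : ℕ) : ℝ) := by push_cast; linarith
    have a1 := h1 _ x1
    have a2 := h1 _ x2
    have a3 := h1 _ x3
    have b1 := h2 _ x1
    have b2 := h2 _ x2
    have b3 := h2 _ x3
    calc _ ≤ 1/3 * (1/3 * (1/3 * GG (3*(k+2)))) := by gcongr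
      _ ≤ 1/3 * GG (3*(k+2)) := by linarith
      _ ≤ 1/3 * (9/5 * (1/3)^(k+2)) := by linarith
      _ = _ := by rw [show k+1+2 = (k+2)+1 by omega, pow_succ]; ring

theorem num_upper (l : ℕ) (hl : 2 ≤ l) (S : Finset ℕ) (hS : S ⊆ Finset.Icc 1 (3*l)) :
    (numPeakSet (3*l) S : ℝ) ≤ (3*l).factorial * (9/5 * (1/3)^l) := by
  classical
  let T : ℕ → Prop := fun x => x + 1 ∈ S ∨ 3*l ≤ x
  have hinf : (Set.ofPred T).Infinite :=
    (Set.Ici_infinite (3*l)).mono (fun x hx => Or.inr hx)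
  have hp := Nat.nth_strictMono hinf
  have hT : SP (Nat.nth T) = T := by
    have := Nat.range_nth_of_infinite hinf
    funext x
    have h2 := Set.ext_iff.1 this x
    exact propext h2
  have hSf : S = (Finset.Icc 1 (3*l)).filter (fun x => T (x-1)) := by
    ext x
    rw [Finset.mem_filter]
    constructor
    · intro hx
      have h1 := hS hx
      have h2 := Finset.mem_Icc.1 h1
      refine ⟨h1, Or.inl ?_⟩
      rwa [Nat.sub_add_cancel h2.1]
    · rintro ⟨h1, h2⟩
      have h3 := Finset.mem_Icc.1 h1
      rcases h2 with h2 | h2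
      · rwa [Nat.sub_add_cancel h3.1] at h2
      · omega
  have hnum : (numPeakSet (3*l) S : ℝ) = (3*l).factorial * qq T (3*l) 0 := by
    rw [← numPeakSet_eq_s3 (3*l) T]
    congr 2
    convert hSf
  rw [hnum]
  refine mul_le_mul_of_nonneg_left ?_ (by positivity)
  change QQ T 0 (3*l) ≤ _
  have hcount : ∀ m, m < Nat.count T (3*l) ↔ Nat.nth T m < 3*l := fun m => Nat.lt_nth_iff_count_lt hinf
  rcases Nat.eq_zero_or_pos (Nat.count T (3*l)) with h0 | h0
  · obtain ⟨k, rfl⟩ : ∃ k, l = k + 2 := ⟨l - 2, by omega⟩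
    have := QQ_no T (3*(k+2)) 0 ?_
    · rw [Nat.zero_add] at this
      rw [this]
      exact GG_small k
    · intro x _ hx hTx
      rw [← hT] at hTx
      obtain ⟨m, rfl⟩ := hTx
      have := (hcount m).2 (by omega)
      omega
  · rw [← hT]
    refine QQ_upper _ hp l 0 (Nat.count T (3*l) - 1) (Nat.zero_le _) hl ?_
    intro m
    rw [← hcount m]
    omega

theorem num_lower (l : ℕ) (hl : 2 ≤ l) : ∃ S ∈ (Finset.Icc 1 (3*l)).powerset,
    (numPeakSet (3*l) S : ℝ) = (3*l).factorial * (9/5 * (1/3)^l) := by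
  classical
  let p : ℕ → ℕ := fun m => if m ≤ l - 2 then 3*m+2 else 3*m+5
  have hp : StrictMono p := by
    refine strictMono_nat_of_lt_succ fun m => ?_
    simp only [p]
    split_ifs <;> omega
  have hW : Win p 0 (3*l) 0 (l-2) := by
    intro m
    simp only [p]
    split_ifs <;> omega
  refine ⟨(Finset.Icc 1 (3*l)).filter (fun x => SP p (x-1)), ?_, ?_⟩
  · rw [Finset.mem_powerset]; exact Finset.filter_subset _ _
  · rw [numPeakSet_eq_s3]
    congr 1
    change QQ (SP p) 0 (3*l) = _
    have h0 : p 0 = 2 := by simp [p]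
    have h1 : p (l-2) = 3*(l-2)+2 := by simp [p]
    rw [QQ_exact p hp (3*l-0) 0 (3*l) 0 (l-2) rfl (Nat.zero_le _) hW ?_ (by omega) (by omega) (by omega)]
    · rw [h0, show 3*l - 1 - p (l-2) = 3 by omega]
      obtain ⟨k, rfl⟩ : ∃ k, l = k + 2 := ⟨l - 2, by omega⟩
      rw [show k + 2 - 2 - 0 = k by omega, pow_add]
      norm_num [ex]
      ring
    · intro m _ hm
      simp only [p]
      rw [if_pos (by omega), if_pos (by omega)]
      omega

theorem max_peak_set_count_mod_zero (ℓ n : ℕ) (hℓ : 2 ≤ ℓ) (hn : n = 3 * ℓ) :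
    5 * 3 ^ (ℓ - 2) *
      ((Finset.Icc 1 n).powerset.sup fun S => numPeakSet n S) = Nat.factorial n := by
  subst hn
  obtain ⟨S, hS, hSv⟩ := num_lower ℓ hℓ
  obtain ⟨S', hS', hsup⟩ := Finset.exists_mem_eq_sup (Finset.Icc 1 (3*ℓ)).powerset ⟨S, hS⟩
    (fun S => numPeakSet (3*ℓ) S)
  have h1 : numPeakSet (3*ℓ) S ≤ (Finset.Icc 1 (3*ℓ)).powerset.sup fun S => numPeakSet (3*ℓ) S :=
    Finset.le_sup (f := fun S => numPeakSet (3*ℓ) S) hS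
  have h2 := num_upper ℓ hℓ S' (Finset.mem_powerset.1 hS')
  rw [hsup] at h1 ⊢
  have h3 : (numPeakSet (3*ℓ) S' : ℝ) = (3*ℓ).factorial * (9/5 * (1/3)^ℓ) := by
    refine le_antisymm h2 ?_
    rw [← hSv]
    exact_mod_cast h1
  have h4 : (((5 * 3 ^ (ℓ - 2) * numPeakSet (3*ℓ) S' : ℕ)) : ℝ) = ((3*ℓ).factorial : ℝ) := by
    push_cast
    rw [h3]
    obtain ⟨k, rfl⟩ : ∃ k, ℓ = k + 2 := ⟨ℓ - 2, by omega⟩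
    rw [show k + 2 - 2 = k by omega, pow_add]
    have : (3:ℝ)^k * (1/3)^k = 1 := by rw [← mul_pow]; norm_num
    linear_combination ((3*(k+2)).factorial : ℝ) * this
  exact_mod_cast h4
end
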